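/- arXiv:math/0006207 — 6 statements merged into one kernel-verified Lean document; each statement's English description precedes it below -/
import Mathlib

section
/- The number of partitions of a positive integer n into distinct parts congruent to 1 or 2 modulo 3 equals the number of partitions of n into parts such that the difference between any two consecutive parts is at least 3, and is strictly greater than 3 whenever the larger of the two parts is a multiple of 3 (equivalently, no two consecutive multiples of 3 occur as parts). -/
namespace SchurAux

/-- The auxiliary three-term recurrence (Andrews). -/
def e {R : Type*} [CommRing R] (q x : R) : ℕ → R
  | 0 => 1
  | 1 => 1 + x * q + x * q ^ 2
  | (n + 2) => (1 + x * q ^ (3 * n + 4) + x * q ^ (3 * n + 5)) * e q x (n + 1)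
      + x ^ 2 * q ^ (3 * n + 3) * (1 - q ^ (3 * n + 3)) * e q x n

theorem e_shift {R : Type*} [CommRing R] (q x : R) (n : ℕ) :
    e q x (n + 2) = (1 + x * q + x * q ^ 2) * e q (x * q ^ 3) (n + 1)
      + x ^ 2 * q ^ 3 * (1 - q ^ (3 * n + 3)) * e q (x * q ^ 3) n := by
  induction n using Nat.strong_induction_on with
  | _ n ih =>
    match n with
    | 0 => simp only [e]; ring
    | 1 => simp only [e]; ring
    | (n + 2) =>
      have h1 := ih (n + 1) (by omega)
      have h0 := ih n (by omega)
      rw [show n + 2 + 2 = (n + 2) + 2 from rfl, e, show n + 2 + 1 = (n + 1) + 2 from rfl, h1, h0]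
      rw [show e q (x * q ^ 3) (n + 1 + 2) = _ from e.eq_3 _ _ _]
      rw [show n + 1 + 1 = n + 2 from rfl,
        show e q (x * q ^ 3) (n + 2) = _ from e.eq_3 _ _ _]
      ring

theorem e_zero {R : Type*} [CommRing R] (q : R) (n : ℕ) : e q 0 n = 1 := by
  induction n using Nat.strong_induction_on with
  | _ n ih =>
    match n with
    | 0 => simp [e]
    | 1 => simp [e]
    | (n + 2) => simp [e, ih (n + 1) (by omega)]

theorem pow_zero_of_le {R : Type*} [CommRing R] {q : R} {M k : ℕ} (h : q ^ M = 0) (hk : M ≤ k) :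
    q ^ k = 0 := by
  obtain ⟨c, rfl⟩ := Nat.exists_eq_add_of_le hk
  rw [pow_add, h, zero_mul]

theorem e_const {R : Type*} [CommRing R] (q x : R) (M : ℕ) (h : q ^ M = 0) (k : ℕ) :
    e q x (M + 1 + k) = e q x (M + 1) := by
  induction k with
  | zero => rfl
  | succ k ih =>
    rw [show M + 1 + (k + 1) = (M + k) + 2 by ring, e,
      pow_zero_of_le h (show M ≤ 3 * (M + k) + 4 by omega),
      pow_zero_of_le h (show M ≤ 3 * (M + k) + 5 by omega),
      pow_zero_of_le h (show M ≤ 3 * (M + k) + 3 by omega),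
      show M + k + 1 = M + 1 + k by ring, ih]
    ring

theorem e_fact {R : Type*} [CommRing R] (q x : R) (M : ℕ) (h : q ^ M = 0) :
    e q x (M + 1) = (1 + x * q) * (1 + x * q ^ 2) * e q (x * q ^ 3) (M + 1) := by
  have h1 := e_shift q x (M + 1)
  rw [show M + 1 + 2 = M + 1 + 2 from rfl, e_const q x M h 2,
    e_const q (x * q ^ 3) M h 1, pow_zero_of_le h (show M ≤ 3 * (M + 1) + 3 by omega)] at h1
  rw [h1]; ring

theorem e_prod {R : Type*} [CommRing R] (q : R) (F : ℕ → R) (F0 : F 0 = 1)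
    (hF : ∀ k, F (k + 1) = (1 + q ^ (3 * k + 1)) * (1 + q ^ (3 * k + 2)) * F k)
    (M : ℕ) (h : q ^ M = 0) : e q 1 (M + 1) = F M := by
  have key : ∀ k, e q 1 (M + 1) = F k * e q (q ^ (3 * k)) (M + 1) := by
    intro k
    induction k with
    | zero => simp [F0]
    | succ k ih =>
      rw [ih, e_fact q _ M h, hF, show 3 * (k + 1) = 3 * k + 3 by ring, pow_add q (3 * k) 3]
      ring
  rw [key M, pow_zero_of_le h (show M ≤ 3 * M by omega), e_zero, mul_one]

/-- Lists of positive allowed parts, bounded by `N`, each part `x` followed by a part at most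
`g x`, with sum `m`. -/
def L (a : ℕ → Prop) (g : ℕ → ℕ) (N m : ℕ) : Set (List ℕ) :=
  {l | (∀ x ∈ l, 0 < x ∧ a x ∧ x ≤ N) ∧ l.IsChain (fun x y => y ≤ g x) ∧ l.sum = m}

theorem finite_pos (m : ℕ) : {l : List ℕ | (∀ x ∈ l, 0 < x) ∧ l.sum = m}.Finite := by
  refine (Set.finite_range (fun c : Composition m => c.blocks)).subset ?_
  rintro l ⟨h1, h2⟩
  exact ⟨⟨l, fun {i} hi => h1 i hi, h2⟩, rfl⟩

theorem L_finite (a : ℕ → Prop) (g : ℕ → ℕ) (N m : ℕ) : (L a g N m).Finite :=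
  (finite_pos m).subset fun _ h => ⟨fun x hx => (h.1 x hx).1, h.2.2⟩

theorem L_bound {a : ℕ → Prop} {g : ℕ → ℕ} (hg : ∀ x, 0 < x → g x < x) (l : List ℕ) (x : ℕ)
    (hx : 0 < x) (hpos : ∀ y ∈ l, 0 < y ∧ a y)
    (h : (x :: l).IsChain (fun x y => y ≤ g x)) : ∀ y ∈ l, y ≤ g x := by
  induction l generalizing x with
  | nil => simp
  | cons z l ih =>
    rw [List.isChain_cons_cons] at h
    have hz := (hpos z (by simp)).1
    intro y hy
    rcases List.mem_cons.1 hy with rfl | hy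
    · exact h.1
    · have := ih z hz (fun y hy => hpos y (by simp [hy])) h.2 y hy
      have := hg z hz
      omega

theorem L_succ (a : ℕ → Prop) (g : ℕ → ℕ) (hg : ∀ x, 0 < x → g x < x) (N m : ℕ)
    (ha : a (N + 1)) (hm : N + 1 ≤ m) :
    L a g (N + 1) m = L a g N m ∪ (List.cons (N + 1)) '' L a g (g (N + 1)) (m - (N + 1)) := by
  ext l
  constructor
  · rintro ⟨h1, h2, h3⟩
    cases l with
    | nil => left; exact ⟨by simp, h2, h3⟩
    | cons x l =>
      have hx := h1 x (by simp)
      have hb := L_bound (a := a) hg l x hx.1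
        (fun y hy => ⟨(h1 y (by simp [hy])).1, (h1 y (by simp [hy])).2.1⟩) h2
      by_cases hxN : x = N + 1
      · subst hxN
        right
        refine ⟨l, ⟨fun y hy => ?_, h2.tail, ?_⟩, rfl⟩
        · have := h1 y (by simp [hy])
          exact ⟨this.1, this.2.1, hb y hy⟩
        · simp at h3; omega
      · left
        refine ⟨fun y hy => ?_, h2, h3⟩
        have h4 := h1 y hy
        refine ⟨h4.1, h4.2.1, ?_⟩
        rcases List.mem_cons.1 hy with rfl | hy
        · omega
        · have := hb y hy
          have := hg x hx.1
          omega
  · rintro (⟨h1, h2, h3⟩ | ⟨l, ⟨h1, h2, h3⟩, rfl⟩)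
    · refine ⟨fun x hx => ?_, h2, h3⟩
      have := h1 x hx
      exact ⟨this.1, this.2.1, by omega⟩
    · have := hg (N + 1) (by omega)
      refine ⟨fun x hx => ?_, ?_, ?_⟩
      · rcases List.mem_cons.1 hx with rfl | hx
        · exact ⟨by omega, ha, le_rfl⟩
        · have := h1 x hx
          exact ⟨this.1, this.2.1, by omega⟩
      · rw [List.isChain_cons]
        refine ⟨fun y hy => (h1 y ?_).2.2, h2⟩
        exact List.mem_of_mem_head? hy
      · simp [h3]; omega

theorem L_succ' (a : ℕ → Prop) (g : ℕ → ℕ) (N m : ℕ)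
    (ha : ¬ (a (N + 1) ∧ N + 1 ≤ m)) :
    L a g (N + 1) m = L a g N m := by
  ext l
  constructor
  · rintro ⟨h1, h2, h3⟩
    refine ⟨fun x hx => ?_, h2, h3⟩
    have := h1 x hx
    refine ⟨this.1, this.2.1, ?_⟩
    by_contra hlt
    have hxe : x = N + 1 := by omega
    subst hxe
    exact ha ⟨this.2.1, h3 ▸ List.le_sum_of_mem hx⟩
  · rintro ⟨h1, h2, h3⟩
    refine ⟨fun x hx => ?_, h2, h3⟩
    have := h1 x hx
    exact ⟨this.1, this.2.1, by omega⟩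

open PowerSeries in
/-- Generating function. -/
noncomputable def G (a : ℕ → Prop) (g : ℕ → ℕ) (N : ℕ) : PowerSeries ℤ :=
  PowerSeries.mk fun m => ((L a g N m).ncard : ℤ)

theorem G_zero (a : ℕ → Prop) (g : ℕ → ℕ) : G a g 0 = 1 := by
  ext m
  rw [G, PowerSeries.coeff_mk, PowerSeries.coeff_one]
  have h : ∀ l, l ∈ L a g 0 m ↔ (l = [] ∧ m = 0) := by
    intro l
    constructor
    · rintro ⟨h1, h2, h3⟩
      cases l with
      | nil => simpa using h3.symm
      | cons x l => have := h1 x (by simp); omega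
    · rintro ⟨rfl, rfl⟩
      exact ⟨by simp, by simp, by simp⟩
  split_ifs with hm
  · have : L a g 0 m = {[]} := by ext l; rw [h]; simp [hm]
    rw [this]; simp
  · have : L a g 0 m = ∅ := by ext l; rw [h]; simp [hm]
    rw [this]; simp

theorem G_succ (a : ℕ → Prop) (g : ℕ → ℕ) (hg : ∀ x, 0 < x → g x < x) (N : ℕ)
    (ha : a (N + 1)) :
    G a g (N + 1) = G a g N + PowerSeries.X ^ (N + 1) * G a g (g (N + 1)) := by
  ext m
  rw [map_add, PowerSeries.coeff_X_pow_mul']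
  simp only [G, PowerSeries.coeff_mk]
  split_ifs with hm
  · rw [L_succ a g hg N m ha hm, Set.ncard_union_eq ?_ (L_finite _ _ _ _) ((L_finite _ _ _ _).image _),
      Set.ncard_image_of_injective]
    · push_cast; rfl
    · exact List.cons_injective
    · rw [Set.disjoint_left]
      rintro _ ⟨h1, -, -⟩ ⟨l, -, rfl⟩
      have := h1 (N + 1) (by simp)
      omega
  · rw [L_succ' a g N m (by tauto), add_zero]

theorem G_succ' (a : ℕ → Prop) (g : ℕ → ℕ) (N : ℕ)
    (ha : ¬ a (N + 1)) : G a g (N + 1) = G a g N := by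
  ext m
  simp only [G, PowerSeries.coeff_mk]
  rw [L_succ' a g N m (by tauto)]

/-- Gap function for the Schur side. -/
def gs (x : ℕ) : ℕ := if x % 3 = 0 then x - 4 else x - 3

theorem gs_lt (x : ℕ) (hx : 0 < x) : gs x < x := by
  unfold gs; split_ifs <;> omega

theorem left_rec (k : ℕ) :
    G (fun x => x % 3 = 1 ∨ x % 3 = 2) (fun x => x - 1) (3 * (k + 1)) =
    (1 + PowerSeries.X ^ (3 * k + 1)) * (1 + PowerSeries.X ^ (3 * k + 2)) *
      G (fun x => x % 3 = 1 ∨ x % 3 = 2) (fun x => x - 1) (3 * k) := by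
  have hg : ∀ x : ℕ, 0 < x → (fun x => x - 1) x < x := fun x hx => by simp; omega
  rw [show 3 * (k + 1) = 3 * k + 2 + 1 by ring, G_succ' _ _ _ (by omega),
    G_succ _ _ hg (3 * k + 1) (by omega)]
  simp only [Nat.add_sub_cancel]
  rw [G_succ _ _ hg (3 * k) (by omega)]
  simp only [Nat.add_sub_cancel]
  ring

theorem right_eq (n : ℕ) :
    e (PowerSeries.X : PowerSeries ℤ) 1 (n + 1) = G (fun _ => True) gs (3 * n + 2) := by
  have h0 : G (fun _ => True) gs 0 = 1 := G_zero _ _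
  have hs := fun N => G_succ (fun _ => True) gs gs_lt N trivial
  have g1 : gs 1 = 0 := rfl
  have g2 : gs 2 = 0 := rfl
  have g3 : gs 3 = 0 := rfl
  have g4 : gs 4 = 1 := rfl
  have g5 : gs 5 = 2 := rfl
  have s1 := hs 0
  have s2 := hs 1
  have s3 := hs 2
  have s4 := hs 3
  have s5 := hs 4
  simp only [Nat.reduceAdd, g1, g2, g3, g4, g5, h0] at s1 s2 s3 s4 s5
  induction n using Nat.strong_induction_on with
  | _ n ih =>
    match n with
    | 0 => simp only [e, mul_zero, zero_add]; rw [s2, s1]; ring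
    | 1 =>
      simp only [e, mul_zero, zero_add, mul_one, Nat.reduceAdd]
      rw [s5, s4, s3, s2, s1]; ring
    | (n + 2) =>
      rw [e, ih (n + 1) (by omega), ih n (by omega)]
      have t1 := hs (3 * n + 4)
      have t2 := hs (3 * n + 5)
      have t3 := hs (3 * n + 6)
      have t4 := hs (3 * n + 7)
      rw [show gs (3 * n + 4 + 1) = 3 * n + 2 by unfold gs; split_ifs <;> omega] at t1
      rw [show gs (3 * n + 5 + 1) = 3 * n + 2 by unfold gs; split_ifs <;> omega] at t2
      rw [show gs (3 * n + 6 + 1) = 3 * n + 4 by unfold gs; split_ifs <;> omega] at t3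
      rw [show gs (3 * n + 7 + 1) = 3 * n + 5 by unfold gs; split_ifs <;> omega] at t4
      simp only [add_assoc, Nat.reduceAdd] at t1 t2 t3 t4
      simp only [mul_add, add_assoc, Nat.reduceAdd, Nat.reduceMul, mul_one]
      rw [t4, t3, t2]
      have t1' := eq_sub_of_add_eq t1.symm
      rw [t1']
      ring

theorem map_e {R S : Type*} [CommRing R] [CommRing S] (φ : R →+* S) (q x : R) (n : ℕ) :
    φ (e q x n) = e (φ q) (φ x) n := by
  induction n using Nat.strong_induction_on with
  | _ n ih =>
    match n with
    | 0 => simp [e]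
    | 1 => simp [e]
    | (n + 2) => simp [e, ih (n + 1) (by omega), ih n (by omega)]

theorem count_eq (n : ℕ) :
    (L (fun x => x % 3 = 1 ∨ x % 3 = 2) (fun x => x - 1) (3 * (n + 1)) n).ncard =
    (L (fun _ => True) gs (3 * (n + 1) + 2) n).ncard := by
  let I : Ideal (PowerSeries ℤ) := Ideal.span {PowerSeries.X ^ (n + 1)}
  let φ := Ideal.Quotient.mk I
  have hq : (φ PowerSeries.X) ^ (n + 1) = 0 := by
    rw [← map_pow]
    exact Ideal.Quotient.eq_zero_iff_mem.2 (Ideal.mem_span_singleton_self _)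
  have h := e_prod (φ PowerSeries.X)
    (fun k => φ (G (fun x => x % 3 = 1 ∨ x % 3 = 2) (fun x => x - 1) (3 * k)))
    (by simp [G_zero]) (fun k => by simp only [left_rec, map_mul, map_add, map_one, map_pow])
    (n + 1) hq
  rw [← map_one φ, ← map_e, right_eq] at h
  have h2 := Ideal.mem_span_singleton.1 (Ideal.Quotient.eq.1 h)
  have h3 := PowerSeries.X_pow_dvd_iff.1 h2 n (by omega)
  simp only [map_sub, G, PowerSeries.coeff_mk] at h3
  omega

theorem chain_iff {r s : ℕ → ℕ → Prop} (l : List ℕ) (p : ℕ → Prop) (hp : ∀ x ∈ l, p x)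
    (h : ∀ x y, p x → p y → (r x y ↔ s x y)) : l.IsChain r ↔ l.IsChain s := by
  induction l with
  | nil => simp
  | cons x l ih =>
    cases l with
    | nil => simp
    | cons y l =>
      rw [List.isChain_cons_cons, List.isChain_cons_cons,
        h x y (hp _ (by simp)) (hp _ (by simp)), ih (fun z hz => hp z (by simp at hz ⊢; tauto))]

end SchurAux

open SchurAux in
/-- Schur's partition theorem: the number of partitions of `n` into distinct parts
congruent to 1 or 2 mod 3 equals the number of partitions of `n` into parts where
consecutive parts differ by at least 3, with strict inequality (difference > 3)
whenever the larger part is a multiple of 3.  Partitions are represented as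
(strictly/weakly) decreasing lists of positive integers. -/
theorem schur_partition_theorem (n : ℕ) (hn : 0 < n) :
    {l : List ℕ | l.Chain' (· > ·) ∧ (∀ x ∈ l, x % 3 = 1 ∨ x % 3 = 2) ∧ l.sum = n}.ncard =
    {l : List ℕ | (∀ x ∈ l, 0 < x) ∧
      l.Chain' (fun x y => y + 3 ≤ x ∧ (x % 3 = 0 → y + 3 < x)) ∧ l.sum = n}.ncard := by
  have h := count_eq n
  convert h using 2
  · ext l
    constructor
    · rintro ⟨h1, h2, h3⟩
      have hp : ∀ x ∈ l, 0 < x := fun x hx => by have := h2 x hx; omega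
      refine ⟨fun x hx => ⟨hp x hx, h2 x hx, ?_⟩, ?_, h3⟩
      · have := List.le_sum_of_mem hx
        omega
      · exact (chain_iff l (0 < ·) hp (fun x y hx hy => by simp only []; omega)).1 h1
    · rintro ⟨h1, h2, h3⟩
      refine ⟨?_, fun x hx => (h1 x hx).2.1, h3⟩
      exact (chain_iff l (0 < ·) (fun x hx => (h1 x hx).1)
        (fun x y hx hy => by simp only []; omega)).1 h2
  · ext l
    constructor
    · rintro ⟨hp, h1, h3⟩
      refine ⟨fun x hx => ⟨hp x hx, trivial, ?_⟩, ?_, h3⟩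
      · have := List.le_sum_of_mem hx
        omega
      · exact (chain_iff l (0 < ·) hp
          (fun x y hx hy => by simp only [gs]; split_ifs <;> omega)).1 h1
    · rintro ⟨h1, h2, h3⟩
      refine ⟨fun x hx => (h1 x hx).1, ?_, h3⟩
      exact (chain_iff l (0 < ·) (fun x hx => (h1 x hx).1)
        (fun x y hx hy => by simp only [gs]; split_ifs <;> omega)).1 h2
end

section
/- For all integers L, M, i, j, the identity \sum_{k=0}^{\min(i,j)} q^{(i-k)(j-k)} [M-i-j+k; k] [M-j; i-k] [L-i; j-k] = [L; j] [M-j; i] holds in the field of rational functions ℚ(q), where [m; r] denotes the extended q-binomial coefficient. -/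
open Finset

/-- `(q)_n = (q;q)_n = ∏_{t=0}^{n-1} (1 - q^{t+1})` in `ℚ(q)`. -/
noncomputable def qPoch (n : ℕ) : RatFunc ℚ :=
  ∏ t ∈ Finset.range n, (1 - (RatFunc.X : RatFunc ℚ) ^ (t + 1))

/-- The extended q-binomial coefficient `[m; r] = (q^{m-r+1}; q)_r / (q;q)_r` for `r ≥ 0`
(where `m` may be any integer, so negative powers of `q` are allowed), and `0` for `r < 0`. -/
noncomputable def qbinE (m r : ℤ) : RatFunc ℚ :=
  if 0 ≤ r then
    (∏ t ∈ Finset.range r.toNat, (1 - (RatFunc.X : RatFunc ℚ) ^ (m - r + 1 + (t : ℤ)))) /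
      qPoch r.toNat
  else 0

lemma X_pow_ne_one_aux (n : ℕ) : (1 - (RatFunc.X : RatFunc ℚ) ^ (n + 1)) ≠ 0 := by
  intro h
  have h1 : (RatFunc.X : RatFunc ℚ) ^ (n + 1) = 1 := (sub_eq_zero.mp h).symm
  rw [← RatFunc.algebraMap_X, ← map_pow, ← map_one (algebraMap (Polynomial ℚ) (RatFunc ℚ))] at h1
  have h2 := RatFunc.algebraMap_injective ℚ h1
  have h3 := congrArg Polynomial.natDegree h2
  simp at h3

lemma qPoch_ne_zero_aux (n : ℕ) : qPoch n ≠ 0 := by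
  unfold qPoch
  exact Finset.prod_ne_zero_iff.mpr fun t _ => X_pow_ne_one_aux t

lemma qbinE_nat_aux (m : ℤ) (n : ℕ) : qbinE m n =
    (∏ t ∈ Finset.range n, (1 - (RatFunc.X : RatFunc ℚ) ^ (m - n + 1 + (t : ℤ)))) / qPoch n := by
  simp [qbinE]

lemma qbinE_neg_aux (m r : ℤ) (h : r < 0) : qbinE m r = 0 := by
  simp [qbinE, not_le.mpr h]

lemma qbinE_zero_aux (m : ℤ) : qbinE m 0 = 1 := by
  simp [qbinE, qPoch]

lemma qbinE_pascal_aux (L j : ℤ) :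
    qbinE L j = qbinE (L - 1) (j - 1) + (RatFunc.X : RatFunc ℚ) ^ j * qbinE (L - 1) j := by
  rcases lt_trichotomy j 0 with h | h | h
  · rw [qbinE_neg_aux _ _ h, qbinE_neg_aux _ _ h, qbinE_neg_aux _ _ (by omega)]; simp
  · subst h
    rw [qbinE_zero_aux, qbinE_zero_aux, qbinE_neg_aux _ _ (by omega)]; simp
  · obtain ⟨n, rfl⟩ : ∃ n : ℕ, j = ((n + 1 : ℕ) : ℤ) := ⟨(j - 1).toNat, by omega⟩
    have e : (((n + 1 : ℕ) : ℤ) - 1) = (n : ℤ) := by push_cast; ring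
    rw [e, qbinE_nat_aux, qbinE_nat_aux, qbinE_nat_aux, Finset.prod_range_succ,
      Finset.prod_range_succ' _ n]
    have hq : qPoch (n + 1) = qPoch n * (1 - (RatFunc.X : RatFunc ℚ) ^ (n + 1)) := by
      unfold qPoch; rw [Finset.prod_range_succ]
    have h1 := qPoch_ne_zero_aux n
    have h2 := X_pow_ne_one_aux n
    have a1 : ∏ t ∈ Finset.range n, (1 - (RatFunc.X : RatFunc ℚ) ^
        (L - ((n + 1 : ℕ) : ℤ) + 1 + (t : ℤ))) =
        ∏ t ∈ Finset.range n, (1 - (RatFunc.X : RatFunc ℚ) ^ (L - 1 - n + 1 + (t : ℤ))) := by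
      refine Finset.prod_congr rfl fun t _ => ?_
      congr 2; push_cast; ring
    have a2 : ∏ t ∈ Finset.range n, (1 - (RatFunc.X : RatFunc ℚ) ^
        (L - 1 - ((n + 1 : ℕ) : ℤ) + 1 + ((t + 1 : ℕ) : ℤ))) =
        ∏ t ∈ Finset.range n, (1 - (RatFunc.X : RatFunc ℚ) ^ (L - 1 - n + 1 + (t : ℤ))) := by
      refine Finset.prod_congr rfl fun t _ => ?_
      congr 2; push_cast; ring
    rw [a1, a2, hq]
    have e1 : L - ((n + 1 : ℕ) : ℤ) + 1 + (n : ℤ) =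
        ((n + 1 : ℕ) : ℤ) + (L - 1 - ((n + 1 : ℕ) : ℤ) + 1 + ((0 : ℕ) : ℤ)) := by
      push_cast; ring
    rw [e1, zpow_add₀ RatFunc.X_ne_zero, zpow_natCast]
    generalize (RatFunc.X : RatFunc ℚ) ^ (L - 1 - ((n + 1 : ℕ) : ℤ) + 1 + ((0 : ℕ) : ℤ)) = Z
    generalize (RatFunc.X : RatFunc ℚ) ^ (n + 1) = Y at *
    field_simp
    ring

lemma qbinE_top_aux (i : ℕ) : qbinE i ((i + 1 : ℕ) : ℤ) = 0 := by
  rw [qbinE_nat_aux, Finset.prod_range_succ']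
  simp

lemma qbinE_vandermonde_aux (i : ℕ) : ∀ L j : ℤ,
    ∑ k ∈ Finset.range (i + 1), (RatFunc.X : RatFunc ℚ) ^ (((i : ℤ) - k) * (j - k)) *
      qbinE i k * qbinE (L - i) (j - k) = qbinE L j := by
  induction i with
  | zero => intro L j; simp [qbinE_zero_aux]
  | succ i ih =>
    intro L j
    have key : ∀ k : ℕ, (RatFunc.X : RatFunc ℚ) ^ ((((i + 1 : ℕ) : ℤ) - k) * (j - k)) *
        qbinE ((i + 1 : ℕ) : ℤ) k * qbinE (L - ((i + 1 : ℕ) : ℤ)) (j - k) =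
        (RatFunc.X : RatFunc ℚ) ^ ((((i + 1 : ℕ) : ℤ) - k) * (j - k)) *
        qbinE i ((k : ℤ) - 1) * qbinE (L - 1 - i) (j - k) +
        (RatFunc.X : RatFunc ℚ) ^ j * ((RatFunc.X : RatFunc ℚ) ^ (((i : ℤ) - k) * (j - k)) *
        qbinE i k * qbinE (L - 1 - i) (j - k)) := by
      intro k
      rw [qbinE_pascal_aux ((i + 1 : ℕ) : ℤ) k]
      have e1 : ((i + 1 : ℕ) : ℤ) - 1 = i := by push_cast; ring
      have e2 : L - ((i + 1 : ℕ) : ℤ) = L - 1 - i := by push_cast; ring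
      have e3 : (RatFunc.X : RatFunc ℚ) ^ j * (RatFunc.X : RatFunc ℚ) ^ (((i : ℤ) - k) * (j - k))
          = (RatFunc.X : RatFunc ℚ) ^ ((((i + 1 : ℕ) : ℤ) - k) * (j - k)) *
            (RatFunc.X : RatFunc ℚ) ^ (k : ℤ) := by
        rw [← zpow_add₀ RatFunc.X_ne_zero, ← zpow_add₀ RatFunc.X_ne_zero]
        congr 1; push_cast; ring
      rw [e1, e2]
      linear_combination (-(qbinE i k * qbinE (L - 1 - i) (j - k))) * e3
    rw [Finset.sum_congr rfl fun k _ => key k, Finset.sum_add_distrib, ← Finset.mul_sum]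
    rw [Finset.sum_range_succ' _ (i + 1)]
    have hneg : qbinE (i : ℤ) (((0 : ℕ) : ℤ) - 1) = 0 := qbinE_neg_aux _ _ (by simp)
    rw [hneg, Finset.sum_range_succ (fun k : ℕ => (RatFunc.X : RatFunc ℚ) ^
        (((i : ℤ) - k) * (j - k)) * qbinE i k * qbinE (L - 1 - i) (j - k)) (i + 1),
      qbinE_top_aux, ih (L - 1) j, qbinE_pascal_aux L j, ← ih (L - 1) (j - 1)]
    have hs : ∀ k : ℕ, (RatFunc.X : RatFunc ℚ) ^
        ((((i + 1 : ℕ) : ℤ) - ((k + 1 : ℕ) : ℤ)) * (j - ((k + 1 : ℕ) : ℤ))) *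
        qbinE i (((k + 1 : ℕ) : ℤ) - 1) * qbinE (L - 1 - i) (j - ((k + 1 : ℕ) : ℤ)) =
        (RatFunc.X : RatFunc ℚ) ^ (((i : ℤ) - k) * (j - 1 - k)) *
        qbinE i k * qbinE (L - 1 - i) (j - 1 - k) := by
      intro k
      have e1 : ((i + 1 : ℕ) : ℤ) - ((k + 1 : ℕ) : ℤ) = i - k := by push_cast; ring
      have e2 : j - ((k + 1 : ℕ) : ℤ) = j - 1 - k := by push_cast; ring
      have e3 : ((k + 1 : ℕ) : ℤ) - 1 = k := by push_cast; ring
      rw [e1, e2, e3]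
    rw [Finset.sum_congr rfl fun k _ => hs k]
    ring

lemma qbinE_trinomial_aux (m : ℤ) (k l : ℕ) :
    qbinE (m - l) k * qbinE m l = qbinE m ((k + l : ℕ) : ℤ) * qbinE ((k + l : ℕ) : ℤ) k := by
  rw [qbinE_nat_aux, qbinE_nat_aux, qbinE_nat_aux, qbinE_nat_aux, Finset.prod_range_add]
  have hq : qPoch (k + l) = qPoch l * ∏ t ∈ Finset.range k,
      (1 - (RatFunc.X : RatFunc ℚ) ^ (((k + l : ℕ) : ℤ) - k + 1 + (t : ℤ))) := by
    rw [add_comm k l]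
    unfold qPoch
    rw [Finset.prod_range_add]
    congr 1
    refine Finset.prod_congr rfl fun t _ => ?_
    rw [← zpow_natCast]
    congr 2; push_cast; ring
  have h0 := qPoch_ne_zero_aux (k + l)
  have a1 : ∏ t ∈ Finset.range k, (1 - (RatFunc.X : RatFunc ℚ) ^
        (m - l - k + 1 + (t : ℤ))) = ∏ t ∈ Finset.range k, (1 - (RatFunc.X : RatFunc ℚ) ^
        (m - ((k + l : ℕ) : ℤ) + 1 + (t : ℤ))) := by
    refine Finset.prod_congr rfl fun t _ => ?_
    congr 2; push_cast; ring
  have a2 : ∏ t ∈ Finset.range l, (1 - (RatFunc.X : RatFunc ℚ) ^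
        (m - l + 1 + (t : ℤ))) = ∏ t ∈ Finset.range l, (1 - (RatFunc.X : RatFunc ℚ) ^
        (m - ((k + l : ℕ) : ℤ) + 1 + ((k + t : ℕ) : ℤ))) := by
    refine Finset.prod_congr rfl fun t _ => ?_
    congr 2; push_cast; ring
  rw [a1, a2]
  have h1 := qPoch_ne_zero_aux k
  have h2 := qPoch_ne_zero_aux l
  generalize ∏ t ∈ Finset.range k, (1 - (RatFunc.X : RatFunc ℚ) ^
        (m - ((k + l : ℕ) : ℤ) + 1 + (t : ℤ))) = A
  generalize ∏ t ∈ Finset.range l, (1 - (RatFunc.X : RatFunc ℚ) ^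
        (m - ((k + l : ℕ) : ℤ) + 1 + ((k + t : ℕ) : ℤ))) = B
  generalize ∏ t ∈ Finset.range k,
      (1 - (RatFunc.X : RatFunc ℚ) ^ (((k + l : ℕ) : ℤ) - k + 1 + (t : ℤ))) = C at *
  have h3 : C ≠ 0 := by
    rintro rfl
    exact h0 (by rw [hq, mul_zero])
  rw [hq]
  field_simp

/-- The double bounded key identity (2.1) for arbitrary integers `L, M, i, j`, as an
identity in the field of rational functions `ℚ(q)`. -/
theorem double_bounded_key_identity (L M i j : ℤ) :
    ∑ k ∈ Finset.Icc (0 : ℤ) (min i j),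
      (RatFunc.X : RatFunc ℚ) ^ ((i - k) * (j - k)) *
        qbinE (M - i - j + k) k * qbinE (M - j) (i - k) * qbinE (L - i) (j - k) =
    qbinE L j * qbinE (M - j) i := by
  rcases lt_or_ge i 0 with hi | hi
  · rw [Finset.Icc_eq_empty (by simp [hi]), qbinE_neg_aux _ i hi]; simp
  obtain ⟨n, rfl⟩ := Int.eq_ofNat_of_zero_le hi
  rw [← qbinE_vandermonde_aux n L j, Finset.sum_mul]
  have hsub : Finset.Icc (0 : ℤ) (min (n : ℤ) j) ⊆ Finset.Icc (0 : ℤ) n :=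
    Finset.Icc_subset_Icc le_rfl (min_le_left _ _)
  rw [Finset.sum_subset hsub (by
    intro k hk hk'
    simp only [Finset.mem_Icc, le_min_iff, not_and, not_le] at hk hk'
    rw [qbinE_neg_aux (L - n) (j - k) (by have := hk' hk.1 hk.2; omega), mul_zero])]
  refine Finset.sum_nbij' (fun k => k.toNat) (fun k => (k : ℤ)) ?_ ?_ ?_ ?_ ?_
  · intro k hk; simp only [Finset.mem_Icc, Finset.mem_range] at *; omega
  · intro k hk; simp only [Finset.mem_Icc, Finset.mem_range] at *; omega
  · intro k hk; simp only [Finset.mem_Icc] at *; omega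
  · intro k hk; simp
  · intro k hk
    simp only [Finset.mem_Icc] at hk
    obtain ⟨k, rfl⟩ := Int.eq_ofNat_of_zero_le hk.1
    obtain ⟨l, rfl⟩ : ∃ l, n = k + l := ⟨n - k, by omega⟩
    have h := qbinE_trinomial_aux (M - j) k l
    have e1 : M - ((k + l : ℕ) : ℤ) - j + k = M - j - l := by push_cast; ring
    have e2 : ((k + l : ℕ) : ℤ) - k = l := by push_cast; ring
    simp only [Int.toNat_natCast]
    rw [e1, e2]
    linear_combination ((RatFunc.X : RatFunc ℚ) ^ ((l : ℤ) * (j - k)) *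
      qbinE (L - ((k + l : ℕ) : ℤ)) (j - k)) * h
end

section
/- For all integers i, j ≥ 0, the identity \sum_{k=0}^{\min(i,j)} q^{(i-k)(j-k)} / ((q)_k (q)_{i-k} (q)_{j-k}) = 1 / ((q)_i (q)_j) holds as an identity of formal power series in q. -/
open Finset

/-- `(q)_n = (q;q)_n = ∏_{t=0}^{n-1} (1 - q^{t+1})` as a formal power series over `ℚ`. -/
noncomputable def qPochPS (n : ℕ) : PowerSeries ℚ :=
  ∏ t ∈ Finset.range n, (1 - (PowerSeries.X : PowerSeries ℚ) ^ (t + 1))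

theorem qPochPS_const (n : ℕ) : PowerSeries.constantCoeff (qPochPS n) ≠ 0 := by
  simp [qPochPS, map_prod]

theorem qPochPS_inv_step (n : ℕ) :
    (qPochPS n)⁻¹ = (1 - (PowerSeries.X : PowerSeries ℚ) ^ (n + 1)) * (qPochPS (n + 1))⁻¹ := by
  have h : qPochPS (n + 1) = qPochPS n * (1 - (PowerSeries.X : PowerSeries ℚ) ^ (n + 1)) := by
    simp [qPochPS, Finset.prod_range_succ]
  have h1 := PowerSeries.mul_inv_cancel _ (qPochPS_const (n + 1))
  have h2 := PowerSeries.mul_inv_cancel _ (qPochPS_const n)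
  rw [h] at h1
  rw [h]
  linear_combination (-(qPochPS n)⁻¹) * h1 + (1 - (PowerSeries.X : PowerSeries ℚ) ^ (n + 1)) *
    (qPochPS n * (1 - (PowerSeries.X : PowerSeries ℚ) ^ (n + 1)))⁻¹ * h2

/-- The summand, extended by zero for `k > i`. -/
noncomputable def keyTerm (i j k : ℕ) : PowerSeries ℚ :=
  if k ≤ i then (PowerSeries.X : PowerSeries ℚ) ^ ((i - k) * (j - k)) *
        (qPochPS k)⁻¹ * (qPochPS (i - k))⁻¹ * (qPochPS (j - k))⁻¹ else 0

theorem keyTerm_split (i j k : ℕ) :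
    (1 - (PowerSeries.X : PowerSeries ℚ) ^ (i + 1)) * keyTerm (i + 1) j k =
      PowerSeries.X ^ (j - k) * keyTerm i j k +
      (1 - PowerSeries.X ^ k) * PowerSeries.X ^ (i + 1 - k) * keyTerm (i + 1) j k := by
  rcases lt_trichotomy k (i + 1) with h | h | h
  · obtain ⟨a, rfl⟩ : ∃ a, i = k + a := ⟨i - k, by omega⟩
    have e1 : k + a + 1 - k = a + 1 := by omega
    have e2 : k + a - k = a := by omega
    simp only [keyTerm, e1, e2, if_pos (show k ≤ k + a by omega),
      if_pos (show k ≤ k + a + 1 by omega)]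
    rw [qPochPS_inv_step a]
    ring
  · subst h
    simp [keyTerm]
  · simp [keyTerm, show ¬ k ≤ i + 1 by omega, show ¬ k ≤ i by omega]

theorem keyTerm_shift (i j k : ℕ) (hk : k < j) :
    (1 - (PowerSeries.X : PowerSeries ℚ) ^ (k + 1)) * PowerSeries.X ^ (i + 1 - (k + 1)) *
      keyTerm (i + 1) j (k + 1) = (1 - PowerSeries.X ^ (j - k)) * keyTerm i j k := by
  obtain ⟨b, rfl⟩ : ∃ b, j = k + 1 + b := ⟨j - (k + 1), by omega⟩
  by_cases h : k ≤ i
  · obtain ⟨a, rfl⟩ : ∃ a, i = k + a := ⟨i - k, by omega⟩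
    have e1 : k + a + 1 - (k + 1) = a := by omega
    have e2 : k + a - k = a := by omega
    have e3 : k + 1 + b - (k + 1) = b := by omega
    have e4 : k + 1 + b - k = b + 1 := by omega
    simp only [keyTerm, e1, e2, e3, e4, if_pos (show k ≤ k + a by omega),
      if_pos (show k + 1 ≤ k + a + 1 by omega)]
    rw [qPochPS_inv_step k, qPochPS_inv_step b]
    ring
  · simp [keyTerm, h]

theorem keySum_step (i j : ℕ) :
    (1 - (PowerSeries.X : PowerSeries ℚ) ^ (i + 1)) *
      ∑ k ∈ Finset.range (j + 1), keyTerm (i + 1) j k =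
      ∑ k ∈ Finset.range (j + 1), keyTerm i j k := by
  rw [Finset.mul_sum, Finset.sum_congr rfl (fun k _ => keyTerm_split i j k),
    Finset.sum_add_distrib,
    Finset.sum_range_succ' (fun k => (1 - (PowerSeries.X : PowerSeries ℚ) ^ k) *
      PowerSeries.X ^ (i + 1 - k) * keyTerm (i + 1) j k),
    Finset.sum_congr rfl (fun k hk => keyTerm_shift i j k (Finset.mem_range.mp hk)),
    Finset.sum_range_succ, Finset.sum_range_succ (fun k => keyTerm i j k)]
  simp only [Nat.sub_self, pow_zero, sub_self, zero_mul, add_zero, one_mul, sub_mul, Finset.sum_sub_distrib]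
  ring

theorem keySum_eq (i j : ℕ) :
    ∑ k ∈ Finset.range (j + 1), keyTerm i j k = (qPochPS i)⁻¹ * (qPochPS j)⁻¹ := by
  induction i with
  | zero =>
    rw [Finset.sum_range_succ', Finset.sum_eq_zero]
    · simp [keyTerm, qPochPS]
    · intro k _
      simp [keyTerm]
  | succ i ih =>
    have h := keySum_step i j
    rw [ih, qPochPS_inv_step i, mul_assoc] at h
    refine mul_left_cancel₀ ?_ h
    intro h0
    have := congrArg PowerSeries.constantCoeff h0
    simp at this

/-- Identity (2.4): for `i, j ≥ 0`,
`∑_{k=0}^{min(i,j)} q^{(i-k)(j-k)} / ((q)_k (q)_{i-k} (q)_{j-k}) = 1 / ((q)_i (q)_j)`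
as formal power series in `q`. -/
theorem key_identity_powerseries (i j : ℕ) :
    ∑ k ∈ Finset.range (min i j + 1),
      (PowerSeries.X : PowerSeries ℚ) ^ ((i - k) * (j - k)) *
        (qPochPS k)⁻¹ * (qPochPS (i - k))⁻¹ * (qPochPS (j - k))⁻¹ =
    (qPochPS i)⁻¹ * (qPochPS j)⁻¹ := by
  rw [← keySum_eq i j]
  symm
  have hsub : Finset.range (min i j + 1) ⊆ Finset.range (j + 1) :=
    Finset.range_subset_range.mpr (by omega)
  rw [← Finset.sum_subset hsub]
  · refine Finset.sum_congr rfl fun k hk => ?_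
    rw [Finset.mem_range] at hk
    rw [keyTerm, if_pos (by omega)]
  · intro k hk hk'
    rw [Finset.mem_range] at hk hk'
    rw [keyTerm, if_neg (by omega)]
end

section
/- Let L, M, i, j be non-negative integers with M ≥ L ≥ i+j. Let P(n; i, j, L, M) denote the number of partitions of n into i distinct parts ≡ 1 (mod 3) each ≤ 3(M−j)−2 together with j distinct parts ≡ 2 (mod 3) each ≤ 3L−1. For non-negative integers r, s, t, l, let G(n; r, s, t, l, L, M) denote the number of partitions of n into parts such that any two consecutive parts differ by at least 3, with difference strictly greater than 3 whenever the larger part is a multiple of 3, having exactly r parts ≡ 1 (mod 3) each ≤ 3M−2, exactly s parts ≡ 2 (mod 3) each ≤ 3(L−l)−1, exactly t parts ≡ 0 (mod 3) each ≤ 3M−3, such that exactly l parts are > 3(L−l)+2 and no part equals 3(L−l) or 3(L−l)+1. Then P(n; i, j, L, M) = \sum_{r+t=i, s+t=j} \sum_{l ≥ 0} G(n; r, s, t, l, L, M). -/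
/-- `P n i j L M`: the number of partitions of `n` (strictly decreasing lists of positive
integers) consisting of `i` distinct parts `≡ 1 (mod 3)`, each `≤ 3(M-j) - 2`, together
with `j` distinct parts `≡ 2 (mod 3)`, each `≤ 3L - 1` (and no parts `≡ 0 (mod 3)`). -/
noncomputable def schurP (n i j L M : ℕ) : ℕ :=
  {π : List ℕ | π.Chain' (· > ·) ∧ (∀ x ∈ π, 0 < x) ∧
    (∀ x ∈ π, x % 3 = 1 ∨ x % 3 = 2) ∧
    (π.filter (fun x => x % 3 = 1)).length = i ∧
    (∀ x ∈ π, x % 3 = 1 → (x : ℤ) ≤ 3 * ((M : ℤ) - (j : ℤ)) - 2) ∧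
    (π.filter (fun x => x % 3 = 2)).length = j ∧
    (∀ x ∈ π, x % 3 = 2 → (x : ℤ) ≤ 3 * (L : ℤ) - 1) ∧
    π.sum = n}.ncard

/-- `G n r s t l L M`: the number of partitions of `n` into parts such that consecutive
parts differ by `≥ 3`, strictly `> 3` when the larger part is a multiple of 3, having
exactly `r` parts `≡ 1 (mod 3)` each `≤ 3M - 2`, exactly `s` parts `≡ 2 (mod 3)` each
`≤ 3(L-l) - 1`, exactly `t` parts `≡ 0 (mod 3)` each `≤ 3M - 3`, such that exactly `l`
parts are `> 3(L-l) + 2` and no part equals `3(L-l)` or `3(L-l) + 1`. -/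
noncomputable def schurG (n r s t l L M : ℕ) : ℕ :=
  {π : List ℕ | (∀ x ∈ π, 0 < x) ∧
    π.Chain' (fun x y => y + 3 ≤ x ∧ (x % 3 = 0 → y + 3 < x)) ∧
    (π.filter (fun x => x % 3 = 1)).length = r ∧
    (∀ x ∈ π, x % 3 = 1 → (x : ℤ) ≤ 3 * (M : ℤ) - 2) ∧
    (π.filter (fun x => x % 3 = 2)).length = s ∧
    (∀ x ∈ π, x % 3 = 2 → (x : ℤ) ≤ 3 * ((L : ℤ) - (l : ℤ)) - 1) ∧
    (π.filter (fun x => x % 3 = 0)).length = t ∧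
    (∀ x ∈ π, x % 3 = 0 → (x : ℤ) ≤ 3 * (M : ℤ) - 3) ∧
    (π.filter (fun x => 3 * ((L : ℤ) - (l : ℤ)) + 2 < (x : ℤ))).length = l ∧
    (∀ x ∈ π, (x : ℤ) ≠ 3 * ((L : ℤ) - (l : ℤ)) ∧ (x : ℤ) ≠ 3 * ((L : ℤ) - (l : ℤ)) + 1) ∧
    π.sum = n}.ncard


open PowerSeries in
/-- Generating function of the lists of positive integers satisfying `p`, by sum. -/
noncomputable def gfc (p : List ℕ → Prop) : PowerSeries ℕ :=
  PowerSeries.mk fun n => {π : List ℕ | (∀ x ∈ π, 0 < x) ∧ p π ∧ π.sum = n}.ncard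

lemma gfc_fin (p : List ℕ → Prop) (n : ℕ) :
    {π : List ℕ | (∀ x ∈ π, 0 < x) ∧ p π ∧ π.sum = n}.Finite := by
  refine (Set.finite_range (fun c : Composition n => c.blocks)).subset ?_
  rintro π ⟨h1, -, h3⟩
  exact ⟨⟨π, fun {i} hi => h1 i hi, h3⟩, rfl⟩

lemma gfc_congr {p q : List ℕ → Prop} (h : ∀ π : List ℕ, (∀ x ∈ π, 0 < x) → (p π ↔ q π)) :
    gfc p = gfc q := by
  unfold gfc
  congr 1; funext n; congr 1; ext π
  simp only [Set.mem_ofPred_eq]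
  constructor
  · rintro ⟨a, b, c⟩; exact ⟨a, (h π a).1 b, c⟩
  · rintro ⟨a, b, c⟩; exact ⟨a, (h π a).2 b, c⟩

lemma gfc_zero {p : List ℕ → Prop} (h : ∀ π : List ℕ, (∀ x ∈ π, 0 < x) → ¬ p π) :
    gfc p = 0 := by
  ext n
  simp only [gfc, PowerSeries.coeff_mk, map_zero]
  rw [Set.ncard_eq_zero (gfc_fin p n)]
  ext π
  simp only [Set.mem_ofPred_eq, Set.mem_empty_iff_false, iff_false]
  rintro ⟨a, b, -⟩
  exact h π a b

lemma gfc_split (p q : List ℕ → Prop) :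
    gfc p = gfc (fun π => p π ∧ ¬ q π) + gfc (fun π => p π ∧ q π) := by
  ext n
  simp only [gfc, PowerSeries.coeff_mk, map_add]
  rw [← Set.ncard_union_eq _ (gfc_fin _ n) (gfc_fin _ n)]
  · congr 1; ext π
    simp only [Set.mem_ofPred_eq, Set.mem_union]; tauto
  · rw [Set.disjoint_left]; intro π h1 h2
    simp only [Set.mem_ofPred_eq] at h1 h2; tauto

lemma gfc_cons {a : ℕ} (ha : 0 < a) (p : List ℕ → Prop) :
    gfc (fun π => p π ∧ π.head? = some a) = PowerSeries.X ^ a * gfc (fun π => p (a :: π)) := by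
  ext n
  rw [PowerSeries.coeff_X_pow_mul']
  simp only [gfc, PowerSeries.coeff_mk]
  split_ifs with h
  · symm
    refine Set.ncard_congr (fun π _ => a :: π) ?_ ?_ ?_
    · rintro π ⟨h1, h2, h3⟩
      refine ⟨?_, ⟨h2, rfl⟩, ?_⟩
      · intro x hx
        rcases List.mem_cons.1 hx with rfl | hx
        · exact ha
        · exact h1 x hx
      · simp [h3]; omega
    · intro π τ _ _ h; simpa using h
    · rintro π ⟨h1, ⟨h2, h4⟩, h3⟩
      cases π with
      | nil => simp at h4
      | cons b τ =>
        simp only [List.head?_cons, Option.some.injEq] at h4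
        subst h4
        refine ⟨τ, ⟨fun x hx => h1 x (List.mem_cons_of_mem _ hx), h2, ?_⟩, rfl⟩
        simp at h3; omega
  · rw [Set.ncard_eq_zero (gfc_fin _ n)]
    ext π
    simp only [Set.mem_ofPred_eq, Set.mem_empty_iff_false, iff_false]
    rintro ⟨h1, ⟨h2, h4⟩, h3⟩
    cases π with
    | nil => simp at h4
    | cons b τ =>
      simp only [List.head?_cons, Option.some.injEq] at h4
      subst h4
      simp at h3; omega

lemma gfc_step {a : ℕ} (ha : 0 < a) (p p1 p2 : List ℕ → Prop)
    (h1 : ∀ π : List ℕ, (∀ x ∈ π, 0 < x) → ((p π ∧ ¬ π.head? = some a) ↔ p1 π))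
    (h2 : ∀ π : List ℕ, (∀ x ∈ π, 0 < x) → (p (a :: π) ↔ p2 π)) :
    gfc p = gfc p1 + PowerSeries.X ^ a * gfc p2 := by
  rw [gfc_split p (fun π => π.head? = some a), gfc_cons ha, gfc_congr h1, gfc_congr h2]

lemma gfc_fiber (p : List ℕ → Prop) (f : List ℕ → ℕ) (N : ℕ)
    (h : ∀ π : List ℕ, (∀ x ∈ π, 0 < x) → p π → f π < N) :
    gfc p = ∑ k ∈ Finset.range N, gfc (fun π => p π ∧ f π = k) := by
  have key : ∀ N : ℕ, gfc (fun π => p π ∧ f π < N) =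
      ∑ k ∈ Finset.range N, gfc (fun π => p π ∧ f π = k) := by
    intro N
    induction N with
    | zero => simp only [Finset.range_zero, Finset.sum_empty]; exact gfc_zero (by simp)
    | succ N ih =>
      rw [Finset.sum_range_succ, ← ih, gfc_split _ (fun π => f π = N)]
      congr 1 <;> apply gfc_congr <;> intro π _ <;> constructor <;> rintro ⟨h1, h2⟩ <;>
        refine ⟨?_, ?_⟩ <;> first | tauto | omega | skip
      · exact ⟨h1, by omega⟩
  rw [← key]
  apply gfc_congr
  intro π hp
  exact ⟨fun hh => ⟨hh, h π hp hh⟩, fun hh => hh.1⟩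

/-- `q`-binomial for the parts `1, 4, 7, …` -/
noncomputable def bA : ℕ → ℕ → PowerSeries ℕ
  | 0, _ => 1
  | _ + 1, 0 => 0
  | i + 1, m + 1 => bA (i + 1) m + PowerSeries.X ^ (3 * m + 1) * bA i m

/-- `q`-binomial for the parts `2, 5, 8, …` -/
noncomputable def bB : ℕ → ℕ → PowerSeries ℕ
  | 0, _ => 1
  | _ + 1, 0 => 0
  | i + 1, m + 1 => bB (i + 1) m + PowerSeries.X ^ (3 * m + 2) * bB i m

lemma bA_zero (m : ℕ) : bA 0 m = 1 := by cases m <;> rfl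
lemma bB_zero (m : ℕ) : bB 0 m = 1 := by cases m <;> rfl
lemma bA_succ (i m : ℕ) :
    bA (i + 1) (m + 1) = bA (i + 1) m + PowerSeries.X ^ (3 * m + 1) * bA i m := by rw [bA]
lemma bB_succ (i m : ℕ) :
    bB (i + 1) (m + 1) = bB (i + 1) m + PowerSeries.X ^ (3 * m + 2) * bB i m := by rw [bB]

lemma bB_big : ∀ (m j : ℕ), m < j → bB j m = 0
  | 0, j + 1, _ => rfl
  | m + 1, j + 1, h => by
    rw [bB_succ, bB_big m (j + 1) (by omega), bB_big m j (by omega)]; simp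

lemma bB_succ' : ∀ (m j : ℕ), bB (j + 1) (m + 1) =
    PowerSeries.X ^ (3 * j + 3) * bB (j + 1) m + PowerSeries.X ^ (3 * j + 2) * bB j m
  | 0, 0 => by rw [bB_succ]; simp [bB_zero]; simp [bB]
  | 0, j + 1 => by rw [bB_succ]; simp [bB]
  | m + 1, 0 => by
    rw [bB_succ 0 (m + 1)]
    conv_lhs => rw [bB_succ' m 0]
    conv_rhs => rw [bB_succ 0 m]
    simp only [bB_zero]; ring
  | m + 1, j + 1 => by
    rw [bB_succ (j + 1) (m + 1)]
    conv_lhs => rw [bB_succ' m (j + 1), bB_succ' m j]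
    conv_rhs => rw [bB_succ (j + 1) m, bB_succ j m]
    ring

/-- Generating function of the product side. -/
noncomputable def PP (i j L M : ℕ) : PowerSeries ℕ := bA i (M - j) * bB j L

lemma PP_L (i j L M : ℕ) : PP i (j + 1) (L + 1) (M + 1) =
    PP i (j + 1) L (M + 1) + PowerSeries.X ^ (3 * L + 2) * PP i j L M := by
  simp only [PP, bB_succ, Nat.add_sub_add_right]; ring

lemma PP_M (i j L M : ℕ) (h : L ≤ M) : PP (i + 1) (j + 1) (L + 1) (M + 2) =
    PP (i + 1) (j + 1) (L + 1) (M + 1) + PowerSeries.X ^ (3 * M + 4) * PP i (j + 1) L (M + 1)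
      + PowerSeries.X ^ (3 * M + 3) * PP i j L M := by
  unfold PP
  by_cases hj : L < j
  · rw [bB_big _ _ hj, bB_big L (j + 1) (by omega), bB_big (L + 1) (j + 1) (by omega)]; simp
  · obtain ⟨m, rfl⟩ : ∃ m, M = j + m := ⟨M - j, by omega⟩
    rw [show j + m + 2 - (j + 1) = m + 1 by omega, show j + m + 1 - (j + 1) = m by omega,
      show j + m - j = m by omega, bA_succ, add_mul, bB_succ']
    ring

lemma PP_M0 (i L L' M : ℕ) : PP (i + 1) 0 L (M + 1) =
    PP (i + 1) 0 L M + PowerSeries.X ^ (3 * M + 1) * PP i 0 L' M := by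
  simp only [PP, bB_zero, Nat.sub_zero, bA_succ]; ring

/-- Gap relation -/
def RR (x y : ℕ) : Prop := y + 3 ≤ x ∧ (x % 3 = 0 → y + 3 < x)

/-- Schur lists with all parts `< B`. -/
def TT (B i j : ℕ) (π : List ℕ) : Prop :=
  π.Pairwise RR ∧ (∀ x ∈ π, x < B) ∧ π.countP (fun x => x % 3 ≠ 2) = i ∧
    π.countP (fun x => x % 3 ≠ 1) = j

/-- The lists of the statement with `K = L - l`. -/
def WW (l K N i j : ℕ) (π : List ℕ) : Prop :=
  π.Pairwise RR ∧ (∀ x ∈ π, x % 3 ≠ 2 → x < N) ∧ (∀ x ∈ π, x % 3 = 2 → x < 3 * K) ∧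
    (∀ x ∈ π, x ≠ 3 * K ∧ x ≠ 3 * K + 1) ∧
    π.countP (fun x => 3 * K + 2 < x) = l ∧ π.countP (fun x => x % 3 ≠ 2) = i ∧
    π.countP (fun x => x % 3 ≠ 1) = j

/-- The lists of the product side. -/
def QQ (i j α β : ℕ) (π : List ℕ) : Prop :=
  π.Pairwise (· > ·) ∧ (∀ x ∈ π, x % 3 ≠ 0) ∧ (∀ x ∈ π, x % 3 = 1 → x < 3 * α) ∧
    (∀ x ∈ π, x % 3 = 2 → x < 3 * β) ∧ π.countP (fun x => x % 3 = 1) = i ∧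
    π.countP (fun x => x % 3 = 2) = j

lemma head_or {R : ℕ → ℕ → Prop} {π : List ℕ} (h : π.Pairwise R) (a : ℕ)
    (hh : ¬ π.head? = some a) (ha : a ∈ π) : ∃ b ∈ π, R b a := by
  cases π with
  | nil => simp at ha
  | cons b τ =>
    simp only [List.head?_cons, Option.some.injEq] at hh
    rcases List.mem_cons.1 ha with rfl | ha
    · exact absurd rfl hh
    · exact ⟨b, by simp, (List.pairwise_cons.1 h).1 a ha⟩

lemma not_head {π : List ℕ} {a : ℕ} (h : a ∉ π) : ¬ π.head? = some a := by
  intro hh; exact h (List.mem_of_mem_head? hh)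

/-! Recurrences for Schur lists. -/

lemma TT_step {a : ℕ} (ha : 0 < a) (B i j i' j' : ℕ) (hB : ∀ x, x < B ↔ RR a x)
    (hi : i = i' + if a % 3 ≠ 2 then 1 else 0) (hj : j = j' + if a % 3 ≠ 1 then 1 else 0) :
    gfc (TT (a + 1) i j) = gfc (TT a i j) + PowerSeries.X ^ a * gfc (TT B i' j') := by
  apply gfc_step ha
  · intro π _
    constructor
    · rintro ⟨⟨h1, h2, h3⟩, h4⟩
      refine ⟨h1, fun x hx => ?_, h3⟩
      have := h2 x hx
      by_contra hc
      obtain rfl : x = a := by omega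
      obtain ⟨b, hb, hb'⟩ := head_or h1 _ h4 hx
      have := h2 b hb
      have := hb'.1
      omega
    · rintro ⟨h1, h2, h3⟩
      exact ⟨⟨h1, fun x hx => (h2 x hx).trans (by omega), h3⟩,
        not_head fun h => absurd (h2 _ h) (by omega)⟩
  · intro π _
    unfold TT
    rw [List.pairwise_cons, List.countP_cons, List.countP_cons, hi, hj]
    simp only [List.mem_cons, forall_eq_or_imp, hB, decide_eq_true_eq, add_left_inj]
    constructor
    · rintro ⟨⟨h1, h2⟩, ⟨h3, h4⟩, h5, h6⟩
      exact ⟨h2, h1, h5, h6⟩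
    · rintro ⟨h1, h2, h3, h4⟩
      exact ⟨⟨h2, h1⟩, ⟨by omega, fun x hx => by have := (h2 x hx).1; omega⟩, h3, h4⟩

lemma TT_none {a : ℕ} (i j : ℕ) (h : a = 0 ∨ (i = 0 ∧ a % 3 ≠ 2) ∨ (j = 0 ∧ a % 3 ≠ 1)) :
    gfc (TT (a + 1) i j) = gfc (TT a i j) := by
  apply gfc_congr
  intro π hπ
  constructor
  · rintro ⟨h1, h2, h3, h4⟩
    refine ⟨h1, fun x hx => ?_, h3, h4⟩
    have := h2 x hx
    have := hπ x hx
    by_contra hc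
    obtain rfl : x = a := by omega
    rcases h with h | ⟨rfl, h⟩ | ⟨rfl, h⟩
    · omega
    · rw [List.countP_eq_zero] at h3
      exact h3 x hx (by simpa using h)
    · rw [List.countP_eq_zero] at h4
      exact h4 x hx (by simpa using h)
  · rintro ⟨h1, h2, h3⟩
    exact ⟨h1, fun x hx => (h2 x hx).trans (by omega), h3⟩

lemma gfc_nil {p : List ℕ → Prop} (h : ∀ π : List ℕ, (∀ x ∈ π, 0 < x) → (p π ↔ π = [])) :
    gfc p = 1 := by
  rw [gfc_congr h]
  ext n
  simp only [gfc, PowerSeries.coeff_mk, PowerSeries.coeff_one]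
  split_ifs with hn
  · subst hn
    rw [Set.ncard_eq_one]
    refine ⟨[], ?_⟩
    ext π
    simp only [Set.mem_ofPred_eq, Set.mem_singleton_iff]
    constructor
    · exact fun h => h.2.1
    · rintro rfl; simp
  · rw [Set.ncard_eq_zero (gfc_fin _ n)]
    ext π
    simp only [Set.mem_ofPred_eq, Set.mem_empty_iff_false, iff_false]
    rintro ⟨-, rfl, h⟩
    exact hn (by simpa using h.symm)

lemma TT_zero (i j : ℕ) : gfc (TT 0 i j) = PP i j 0 0 := by
  have key : ∀ π, TT 0 i j π → π = [] := by
    rintro π ⟨-, h, -⟩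
    exact List.eq_nil_iff_forall_not_mem.2 fun x hx => absurd (h x hx) (by omega)
  by_cases h : i = 0 ∧ j = 0
  · obtain ⟨rfl, rfl⟩ := h
    rw [gfc_nil]
    · simp [PP, bA, bB]
    · intro π _
      refine ⟨key π, ?_⟩
      rintro rfl
      simp [TT]
  · rw [gfc_zero]
    · cases i with
      | succ i => simp [PP, bA]
      | zero =>
        cases j with
        | zero => simp at h
        | succ j => simp [PP, bB]
    · intro π _ hT
      have := key π hT
      subst this
      obtain ⟨-, -, h3, h4⟩ := hT
      simp at h3 h4
      exact h ⟨h3.symm, h4.symm⟩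

lemma TU (L : ℕ) : (∀ i j, gfc (TT (3 * L) i j) = PP i j L L) ∧
    (∀ i j, gfc (TT (3 * L + 2) i j) = PP i j L (L + 1)) ∧
    (∀ i j, gfc (TT (3 * L + 3) i j) = PP i j (L + 1) (L + 1)) := by
  induction L with
  | zero =>
    have hU : ∀ i j, gfc (TT (3 * 0 + 2) i j) = PP i j 0 (0 + 1) := by
      intro i j
      cases i with
      | zero =>
        rw [TT_none (a := 1) _ _ (by simp), TT_none (a := 0) _ _ (by simp), TT_zero]
        simp [PP, bA_zero]
      | succ i =>
        rw [TT_step (a := 1) (by omega) 0 (i + 1) j i j (by intro x; simp [RR]) (by simp) (by simp),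
          TT_none (a := 0) _ _ (by simp), TT_zero, TT_zero]
        cases j with
        | zero => rw [PP_M0 i 0 0 0]
        | succ j => simp [PP, bB]
    refine ⟨fun i j => TT_zero i j, hU, fun i j => ?_⟩
    cases j with
    | zero =>
      rw [TT_none (a := 2) _ _ (by simp)]
      rw [hU]; simp [PP, bB_zero]
    | succ j =>
      rw [TT_step (a := 2) (by omega) 0 i (j + 1) i j (by intro x; simp [RR]) (by simp) (by simp)]
      rw [hU, TT_zero, PP_L]
  | succ L ih =>
    obtain ⟨hT, hU, hT'⟩ := ih
    have hU' : ∀ i j, gfc (TT (3 * (L + 1) + 2) i j) = PP i j (L + 1) (L + 1 + 1) := by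
      intro i j
      rw [show 3 * (L + 1) + 2 = (3 * L + 4) + 1 by ring]
      cases i with
      | zero =>
        rw [TT_none (a := 3 * L + 4) _ _ (by omega), TT_none (a := 3 * L + 3) _ _ (by omega), hT']
        simp [PP, bA_zero]
      | succ i =>
        rw [TT_step (a := 3 * L + 4) (by omega) (3 * L + 2) (i + 1) j i j
          (by intro x; unfold RR; omega) (by rw [if_pos (by omega)]) (by rw [if_neg (by omega)]; rfl)]
        rw [hU]
        cases j with
        | zero =>
          rw [TT_none (a := 3 * L + 3) _ _ (by omega), hT', PP_M0 i (L + 1) L (L + 1)]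
          ring
        | succ j =>
          rw [TT_step (a := 3 * L + 3) (by omega) (3 * L) (i + 1) (j + 1) i j
            (by intro x; unfold RR; omega) (by rw [if_pos (by omega)]) (by rw [if_pos (by omega)])]
          rw [hT', hT, PP_M i j L L le_rfl]
          ring
    refine ⟨hT', hU', fun i j => ?_⟩
    cases j with
    | zero =>
      rw [TT_none (a := 3 * (L + 1) + 2) _ _ (by omega)]
      rw [hU']; simp [PP, bB_zero]
    | succ j =>
      rw [TT_step (a := 3 * (L + 1) + 2) (by omega) (3 * (L + 1)) i (j + 1) i j
        (by intro x; unfold RR; omega) (by rw [if_neg (by omega)]; rfl) (by rw [if_pos (by omega)])]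
      rw [hU', PP_L i j (L + 1) (L + 1), ← hT']
      rfl

/-! Recurrences for the lists of the statement. -/

lemma WW_step {a : ℕ} (l K B i j j' : ℕ) (haK : 3 * K + 2 < a) (ha2 : a % 3 ≠ 2)
    (hB : ∀ x, x % 3 ≠ 2 → (x < B ↔ RR a x))
    (hj : j = j' + if a % 3 ≠ 1 then 1 else 0) :
    gfc (WW (l + 1) K (a + 1) (i + 1) j) =
      gfc (WW (l + 1) K a (i + 1) j) + PowerSeries.X ^ a * gfc (WW l K B i j') := by
  apply gfc_step (by omega)
  · intro π _
    constructor
    · rintro ⟨⟨h1, h2, h5, h3⟩, h4⟩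
      refine ⟨h1, fun x hx hx2 => ?_, h5, h3⟩
      have := h2 x hx hx2
      by_contra hc
      obtain rfl : x = a := by omega
      obtain ⟨b, hb, hb'⟩ := head_or h1 _ h4 hx
      have := h2 b hb
      have := h5 b hb
      have := hb'.1
      omega
    · rintro ⟨h1, h2, h3⟩
      exact ⟨⟨h1, fun x hx hx2 => (h2 x hx hx2).trans (by omega), h3⟩,
        not_head fun h => absurd (h2 _ h ha2) (by omega)⟩
  · intro π _
    unfold WW
    rw [List.pairwise_cons, List.countP_cons, List.countP_cons, List.countP_cons, hj]
    simp only [List.mem_cons, forall_eq_or_imp, decide_eq_true_eq, add_left_inj, if_pos haK,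
      if_pos ha2]
    constructor
    · rintro ⟨⟨h1, h2⟩, ⟨h3, h4⟩, ⟨h5, h6⟩, ⟨h7, h8⟩, h9⟩
      exact ⟨h2, fun x hx hx2 => (hB x hx2).2 (h1 x hx), h6, h8, h9⟩
    · rintro ⟨h1, h2, h3, h4, h5⟩
      refine ⟨⟨fun x hx => ?_, h1⟩, ⟨fun _ => by omega, fun x hx hx2 => ?_⟩,
        ⟨fun h => absurd h ha2, h3⟩, ⟨⟨by omega, by omega⟩, h4⟩, h5⟩
      · by_cases hx2 : x % 3 = 2
        · have := h3 x hx hx2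
          unfold RR; omega
        · exact (hB x hx2).1 (h2 x hx hx2)
      · have := ((hB x hx2).1 (h2 x hx hx2)).1
        omega

lemma WW_none {a : ℕ} (l K i j : ℕ) (h : a % 3 = 2 ∨ (j = 0 ∧ a % 3 = 0)) :
    gfc (WW l K (a + 1) i j) = gfc (WW l K a i j) := by
  apply gfc_congr
  intro π hπ
  constructor
  · rintro ⟨h1, h2, h3, h4, h5, h6, h7⟩
    refine ⟨h1, fun x hx hx2 => ?_, h3, h4, h5, h6, h7⟩
    have := h2 x hx hx2
    by_contra hc
    obtain rfl : x = a := by omega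
    rcases h with h | ⟨rfl, h⟩
    · omega
    · rw [List.countP_eq_zero] at h7
      exact h7 x hx (by simp; omega)
  · rintro ⟨h1, h2, h3⟩
    exact ⟨h1, fun x hx hx2 => (h2 x hx hx2).trans (by omega), h3⟩

lemma WW_M (l K m i j : ℕ) (h : K ≤ m) : gfc (WW (l + 1) K (3 * (m + 2)) (i + 1) (j + 1)) =
    gfc (WW (l + 1) K (3 * (m + 1)) (i + 1) (j + 1)) +
    PowerSeries.X ^ (3 * m + 4) * gfc (WW l K (3 * (m + 1)) i (j + 1)) +
    PowerSeries.X ^ (3 * m + 3) * gfc (WW l K (3 * m) i j) := by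
  rw [show 3 * (m + 2) = 3 * m + 5 + 1 by ring, WW_none (a := 3 * m + 5) _ _ _ _ (by omega),
    WW_step (a := 3 * m + 4) l K (3 * (m + 1)) i (j + 1) (j + 1) (by omega) (by omega)
      (by intro x hx; unfold RR; omega) (by rw [if_neg (by omega)]),
    WW_step (a := 3 * m + 3) l K (3 * m) i (j + 1) j (by omega) (by omega)
      (by intro x hx; unfold RR; omega) (by rw [if_pos (by omega)])]
  rw [show 3 * (m + 1) = 3 * m + 3 by ring]
  ring

lemma WW_M0 (l K m i : ℕ) (h : K ≤ m) : gfc (WW (l + 1) K (3 * (m + 2)) (i + 1) 0) =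
    gfc (WW (l + 1) K (3 * (m + 1)) (i + 1) 0) +
    PowerSeries.X ^ (3 * m + 4) * gfc (WW l K (3 * (m + 1)) i 0) := by
  rw [show 3 * (m + 2) = 3 * m + 5 + 1 by ring, WW_none (a := 3 * m + 5) _ _ _ _ (by omega),
    WW_step (a := 3 * m + 4) l K (3 * (m + 1)) i 0 0 (by omega) (by omega)
      (by intro x hx; unfold RR; omega) (by rw [if_neg (by omega)]),
    WW_none (a := 3 * m + 3) _ _ _ _ (by omega)]
  rw [show 3 * (m + 1) = 3 * m + 3 by ring]

lemma WW_le {l K N i j : ℕ} {π : List ℕ} (h : WW l K N i j π) : l ≤ i := by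
  obtain ⟨h1, h2, h3, h4, h5, h6, h7⟩ := h
  rw [← h5, ← h6]
  apply List.countP_mono_left
  intro x hx hx'
  simp only [decide_eq_true_eq] at hx' ⊢
  intro h
  have := h3 x hx h
  omega

lemma WW_i0 (l K N i j : ℕ) (h : i < l) : gfc (WW l K N i j) = 0 :=
  gfc_zero fun _ _ hW => absurd (WW_le hW) (by omega)

lemma WW_l0 (K M i j : ℕ) (h : K ≤ M) : gfc (WW 0 K (3 * M) i j) = PP i j K K := by
  rw [← (TU K).1]
  apply gfc_congr
  intro π _
  constructor
  · rintro ⟨h1, h2, h3, h4, h5, h6⟩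
    refine ⟨h1, fun x hx => ?_, h6⟩
    rw [List.countP_eq_zero] at h5
    have := h5 x hx
    have := h4 x hx
    have := h3 x hx
    simp only [decide_eq_true_eq] at *
    omega
  · rintro ⟨h1, h2, h3⟩
    refine ⟨h1, fun x hx _ => ?_, fun x hx _ => h2 x hx, fun x hx => ?_, ?_, h3⟩
    · have := h2 x hx; omega
    · have := h2 x hx; omega
    · rw [List.countP_eq_zero]
      intro x hx
      have := h2 x hx
      simp only [decide_eq_true_eq]; omega

lemma WW_low (l K M i j : ℕ) (h : M ≤ K + 1) : gfc (WW (l + 1) K (3 * M) i j) = 0 := by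
  apply gfc_zero
  rintro π _ ⟨h1, h2, h3, h4, h5, h6⟩
  have : 0 < π.countP (fun x => 3 * K + 2 < x) := by omega
  rw [List.countP_pos_iff] at this
  obtain ⟨x, hx, hx'⟩ := this
  have := h2 x hx
  have := h3 x hx
  simp only [decide_eq_true_eq] at hx'
  omega

lemma WW_pig (M : ℕ) : ∀ (l K i j : ℕ), M ≤ K + l + 1 → gfc (WW (l + 1) K (3 * M) i j) = 0 := by
  induction M using Nat.strong_induction_on with
  | _ M ih =>
    intro l K i j h
    by_cases hM : M ≤ K + 1
    · exact WW_low _ _ _ _ _ hM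
    · obtain ⟨m, rfl⟩ : ∃ m, M = m + 2 := ⟨M - 2, by omega⟩
      cases l with
      | zero => omega
      | succ l =>
        cases i with
        | zero => exact WW_i0 _ _ _ _ _ (by omega)
        | succ i =>
          cases j with
          | zero =>
            rw [WW_M0 _ _ _ _ (by omega), ih (m + 1) (by omega) _ _ _ _ (by omega),
              ih (m + 1) (by omega) _ _ _ _ (by omega)]
            simp
          | succ j =>
            rw [WW_M _ _ _ _ _ (by omega), ih (m + 1) (by omega) _ _ _ _ (by omega),
              ih (m + 1) (by omega) _ _ _ _ (by omega), ih m (by omega) _ _ _ _ (by omega)]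
            simp

lemma WW_main (M : ℕ) : ∀ (L i j : ℕ), L ≤ M → i + j ≤ L →
    ∑ l ∈ Finset.range (i + 1), gfc (WW l (L - l) (3 * M) i j) = PP i j L M := by
  induction M using Nat.strong_induction_on with
  | _ M ih =>
    intro L i j hLM hij
    cases i with
    | zero =>
      simp only [zero_add, Finset.sum_range_one, Nat.sub_zero]
      rw [WW_l0 _ _ _ _ hLM]
      simp [PP, bA_zero]
    | succ i =>
      rcases Nat.eq_or_lt_of_le hLM with rfl | hlt
      · rw [Finset.sum_range_succ', Finset.sum_eq_zero, zero_add, Nat.sub_zero,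
          WW_l0 _ _ _ _ le_rfl]
        intro l hl
        exact WW_pig _ _ _ _ _ (by omega)
      · obtain ⟨L, rfl⟩ : ∃ L', L = L' + 1 := ⟨L - 1, by omega⟩
        obtain ⟨m, rfl⟩ : ∃ m, M = m + 2 := ⟨M - 2, by omega⟩
        have ih1 := ih (m + 1) (by omega) (L + 1) (i + 1) j (by omega) (by omega)
        rw [Finset.sum_range_succ', Nat.sub_zero, WW_l0 _ _ _ _ (by omega)] at ih1 ⊢
        simp only [Nat.add_sub_add_right] at ih1 ⊢
        have ih2 := ih (m + 1) (by omega) L i j (by omega) (by omega)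
        cases j with
        | zero =>
          rw [Finset.sum_congr rfl fun l _ => WW_M0 l (L - l) m i (by omega),
            Finset.sum_add_distrib, ← Finset.mul_sum, ih2, add_right_comm, ih1,
            PP_M0 i (L + 1) L (m + 1)]
          ring
        | succ j =>
          have ih3 := ih m (by omega) L i j (by omega) (by omega)
          rw [Finset.sum_congr rfl fun l _ => WW_M l (L - l) m i j (by omega),
            Finset.sum_add_distrib, Finset.sum_add_distrib, ← Finset.mul_sum, ← Finset.mul_sum,
            ih2, ih3, PP_M i j L m (by omega), ← ih1]
          ring

/-! The product side. -/

lemma QQ_b (i j α β : ℕ) (h : α ≤ β + 1) : gfc (QQ i (j + 1) α (β + 1)) =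
    gfc (QQ i (j + 1) α β) + PowerSeries.X ^ (3 * β + 2) * gfc (QQ i j α β) := by
  apply gfc_step (by omega)
  · intro π _
    constructor
    · rintro ⟨⟨h1, h2, h3, h4, h5⟩, h6⟩
      refine ⟨h1, h2, h3, fun x hx hx2 => ?_, h5⟩
      have := h4 x hx hx2
      by_contra hc
      obtain rfl : x = 3 * β + 2 := by omega
      obtain ⟨b, hb, hb'⟩ := head_or h1 _ h6 hx
      have := h2 b hb
      have := h3 b hb
      have := h4 b hb
      omega
    · rintro ⟨h1, h2, h3, h4, h5⟩
      exact ⟨⟨h1, h2, h3, fun x hx hx2 => (h4 x hx hx2).trans (by omega), h5⟩,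
        not_head fun h => absurd (h4 _ h (by omega)) (by omega)⟩
  · intro π _
    unfold QQ
    rw [List.pairwise_cons, List.countP_cons, List.countP_cons]
    simp only [List.mem_cons, forall_eq_or_imp, decide_eq_true_eq]
    rw [if_neg (by omega), if_pos (by omega)]
    constructor
    · rintro ⟨⟨h1, h2⟩, ⟨h3, h4⟩, ⟨h5, h6⟩, ⟨h7, h8⟩, h9, h10⟩
      exact ⟨h2, h4, h6, fun x hx hx2 => by have := h1 x hx; omega, h9, by omega⟩
    · rintro ⟨h1, h2, h3, h4, h5, h6⟩
      refine ⟨⟨fun x hx => ?_, h1⟩, ⟨by omega, h2⟩, ⟨by omega, h3⟩, ⟨by omega, fun x hx hx2 => ?_⟩,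
        h5, by omega⟩
      · have := h2 x hx
        have := h3 x hx
        have := h4 x hx
        omega
      · have := h4 x hx hx2
        omega

lemma QQ_a (i j α β : ℕ) (h : β ≤ α) : gfc (QQ (i + 1) j (α + 1) β) =
    gfc (QQ (i + 1) j α β) + PowerSeries.X ^ (3 * α + 1) * gfc (QQ i j α β) := by
  apply gfc_step (by omega)
  · intro π _
    constructor
    · rintro ⟨⟨h1, h2, h3, h4, h5⟩, h6⟩
      refine ⟨h1, h2, fun x hx hx2 => ?_, h4, h5⟩
      have := h3 x hx hx2
      by_contra hc
      obtain rfl : x = 3 * α + 1 := by omega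
      obtain ⟨b, hb, hb'⟩ := head_or h1 _ h6 hx
      have := h2 b hb
      have := h3 b hb
      have := h4 b hb
      omega
    · rintro ⟨h1, h2, h3, h4, h5⟩
      exact ⟨⟨h1, h2, fun x hx hx2 => (h3 x hx hx2).trans (by omega), h4, h5⟩,
        not_head fun h => absurd (h3 _ h (by omega)) (by omega)⟩
  · intro π _
    unfold QQ
    rw [List.pairwise_cons, List.countP_cons, List.countP_cons]
    simp only [List.mem_cons, forall_eq_or_imp, decide_eq_true_eq]
    rw [if_pos (by omega), if_neg (by omega)]
    constructor
    · rintro ⟨⟨h1, h2⟩, ⟨h3, h4⟩, ⟨h5, h6⟩, ⟨h7, h8⟩, h9, h10⟩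
      exact ⟨h2, h4, fun x hx hx2 => by have := h1 x hx; omega, h8, by omega, h10⟩
    · rintro ⟨h1, h2, h3, h4, h5, h6⟩
      refine ⟨⟨fun x hx => ?_, h1⟩, ⟨by omega, h2⟩, ⟨by omega, fun x hx hx2 => ?_⟩, ⟨by omega, h4⟩,
        by omega, h6⟩
      · have := h2 x hx
        have := h3 x hx
        have := h4 x hx
        omega
      · have := h3 x hx hx2
        omega

lemma QQ_a0 (j α β : ℕ) : gfc (QQ 0 j (α + 1) β) = gfc (QQ 0 j α β) := by
  apply gfc_congr
  intro π _
  constructor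
  · rintro ⟨h1, h2, h3, h4, h5, h6⟩
    refine ⟨h1, h2, fun x hx hx2 => ?_, h4, h5, h6⟩
    rw [List.countP_eq_zero] at h5
    exact absurd (by simpa using hx2) (h5 x hx)
  · rintro ⟨h1, h2, h3, h4⟩
    exact ⟨h1, h2, fun x hx hx2 => (h3 x hx hx2).trans (by omega), h4⟩

lemma QQ_b0 (i α β : ℕ) : gfc (QQ i 0 α (β + 1)) = gfc (QQ i 0 α β) := by
  apply gfc_congr
  intro π _
  constructor
  · rintro ⟨h1, h2, h3, h4, h5, h6⟩
    refine ⟨h1, h2, h3, fun x hx hx2 => ?_, h5, h6⟩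
    rw [List.countP_eq_zero] at h6
    exact absurd (by simpa using hx2) (h6 x hx)
  · rintro ⟨h1, h2, h3, h4, h5⟩
    exact ⟨h1, h2, h3, fun x hx hx2 => (h4 x hx hx2).trans (by omega), h5⟩

lemma QQ_zero (i j : ℕ) : gfc (QQ i j 0 0) = bA i 0 * bB j 0 := by
  have key : ∀ π, QQ i j 0 0 π → π = [] := by
    rintro π ⟨-, h2, h3, h4, -⟩
    refine List.eq_nil_iff_forall_not_mem.2 fun x hx => ?_
    have := h2 x hx
    have := h3 x hx
    have := h4 x hx
    omega
  by_cases h : i = 0 ∧ j = 0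
  · obtain ⟨rfl, rfl⟩ := h
    rw [gfc_nil]
    · simp [bA, bB]
    · intro π _
      refine ⟨key π, ?_⟩
      rintro rfl
      simp [QQ]
  · rw [gfc_zero]
    · cases i with
      | succ i => simp [bA]
      | zero =>
        cases j with
        | zero => simp at h
        | succ j => simp [bB]
    · intro π _ hT
      have := key π hT
      subst this
      obtain ⟨-, -, -, -, h3, h4⟩ := hT
      simp at h3 h4
      exact h ⟨h3.symm, h4.symm⟩

lemma QQ_main (N : ℕ) : ∀ (i j α β : ℕ), α + β = N → gfc (QQ i j α β) = bA i α * bB j β := by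
  induction N with
  | zero =>
    intro i j α β h
    obtain rfl : α = 0 := by omega
    obtain rfl : β = 0 := by omega
    exact QQ_zero i j
  | succ N ih =>
    intro i j α β h
    by_cases hab : β < α
    · obtain ⟨α, rfl⟩ : ∃ a, α = a + 1 := ⟨α - 1, by omega⟩
      cases i with
      | zero => rw [QQ_a0, ih _ _ _ _ (by omega)]; simp [bA_zero]
      | succ i =>
        rw [QQ_a _ _ _ _ (by omega), ih _ _ _ _ (by omega), ih _ _ _ _ (by omega), bA_succ]
        ring
    · obtain ⟨β, rfl⟩ : ∃ a, β = a + 1 := ⟨β - 1, by omega⟩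
      cases j with
      | zero => rw [QQ_b0, ih _ _ _ _ (by omega)]; simp [bB_zero]
      | succ j =>
        rw [QQ_b _ _ _ _ (by omega), ih _ _ _ _ (by omega), ih _ _ _ _ (by omega), bB_succ]
        ring

/-! Linking with the definitions of the statement. -/

lemma schurP_eq (n i j L M : ℕ) (hj : j ≤ M) :
    schurP n i j L M = PowerSeries.coeff n (PP i j L M) := by
  rw [PP, ← QQ_main _ i j (M - j) L rfl]
  simp only [gfc, PowerSeries.coeff_mk, schurP]
  congr 1
  ext π
  simp only [Set.mem_ofPred_eq, QQ, List.countP_eq_length_filter]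
  have hc : π.IsChain (· > ·) ↔ π.Pairwise (· > ·) := List.isChain_iff_pairwise
  constructor
  · rintro ⟨h1, h2, h3, h4, h5, h6, h7, h8⟩
    refine ⟨h2, ⟨hc.1 h1, fun x hx => ?_, fun x hx hx2 => ?_, fun x hx hx2 => ?_, h4, h6⟩, h8⟩
    · have := h3 x hx; omega
    · have := h5 x hx hx2; omega
    · have := h7 x hx hx2; omega
  · rintro ⟨h2, ⟨h1, h3, h4, h5, h6, h7⟩, h8⟩
    refine ⟨hc.2 h1, h2, fun x hx => ?_, h6, fun x hx hx2 => ?_, h7, fun x hx hx2 => ?_, h8⟩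
    · have := h3 x hx; omega
    · have := h4 x hx hx2; omega
    · have := h5 x hx hx2; omega

instance : IsTrans ℕ RR := ⟨fun a b c h1 h2 => by unfold RR at *; omega⟩

lemma count_add (π : List ℕ) :
    π.countP (fun x => x % 3 ≠ 2) =
      π.countP (fun x => x % 3 = 1) + π.countP (fun x => x % 3 = 0) ∧
    π.countP (fun x => x % 3 ≠ 1) =
      π.countP (fun x => x % 3 = 2) + π.countP (fun x => x % 3 = 0) := by
  induction π with
  | nil => simp
  | cons a τ ih =>
    simp only [List.countP_cons, decide_eq_true_eq]
    have h : a % 3 = 0 ∨ a % 3 = 1 ∨ a % 3 = 2 := by omega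
    rcases h with h | h | h <;> simp only [h] <;> norm_num at ih ⊢ <;> omega

lemma cast_filter (π : List ℕ) (c : ℤ) :
    (List.filter (fun x => decide (c < x)) (do let a ← π; pure (a : ℤ))).length =
      π.countP (fun x : ℕ => decide (c < (x : ℤ))) := by
  rw [← List.countP_eq_length_filter]
  have : (do let a ← π; pure (a : ℤ)) = π.map (fun a : ℕ => (a : ℤ)) := by
    induction π with
    | nil => rfl
    | cons a τ ih => simpa using ih
  rw [this, List.countP_map]
  rfl

lemma schurG_eq (n r s t l i j L M : ℕ) (hl : l ≤ L) (hi : r + t = i) (hj : s + t = j) :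
    schurG n r s t l L M = PowerSeries.coeff n (gfc (fun π => ((WW l (L - l) (3 * M) i j π ∧
      π.countP (fun x => x % 3 = 1) = r) ∧ π.countP (fun x => x % 3 = 2) = s) ∧
      π.countP (fun x => x % 3 = 0) = t)) := by
  obtain ⟨K, rfl⟩ : ∃ K, L = K + l := ⟨L - l, by omega⟩
  simp only [gfc, PowerSeries.coeff_mk, schurG]
  congr 1
  ext π
  have hf : π.countP (fun x : ℕ => decide (3 * (((K + l : ℕ) : ℤ) - (l : ℤ)) + 2 < (x : ℤ))) =
      π.countP (fun x : ℕ => decide (3 * K + 2 < x)) := by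
    apply List.countP_congr
    intro x _
    simp only [decide_eq_true_eq]
    omega
  have hc : π.IsChain (fun x y => y + 3 ≤ x ∧ (x % 3 = 0 → y + 3 < x)) ↔ π.Pairwise RR :=
    List.isChain_iff_pairwise (R := RR)
  simp only [Set.mem_ofPred_eq]
  rw [cast_filter, hf]
  simp only [← List.countP_eq_length_filter, WW, Nat.add_sub_cancel]
  obtain ⟨c1, c2⟩ := count_add π
  constructor
  · rintro ⟨h1, h2, h3, h4, h5, h6, h7, h8, h9, h10, h11⟩
    refine ⟨h1, ⟨⟨⟨⟨hc.1 h2, fun x hx hx2 => ?_, fun x hx hx2 => ?_, fun x hx => ?_, h9,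
      by omega, by omega⟩, h3⟩, h5⟩, h7⟩, h11⟩
    · have := h4 x hx
      have := h8 x hx
      omega
    · have := h6 x hx hx2; omega
    · have := h10 x hx; omega
  · rintro ⟨h1, ⟨⟨⟨⟨h2, h4, h6, h10, h9, -, -⟩, h3⟩, h5⟩, h7⟩, h11⟩
    refine ⟨h1, hc.2 h2, h3, fun x hx hx2 => ?_, h5, fun x hx hx2 => ?_, h7, fun x hx hx2 => ?_,
      h9, fun x hx => ?_, h11⟩
    · have := h4 x hx; omega
    · have := h6 x hx; omega
    · have := h4 x hx; omega
    · have := h10 x hx; omega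

lemma schurG_zero (n r s t l L M : ℕ) (h : r + t < l) : schurG n r s t l L M = 0 := by
  unfold schurG
  convert Set.ncard_empty (List ℕ)
  ext π
  simp only [Set.mem_ofPred_eq, Set.mem_empty_iff_false, iff_false]
  rw [cast_filter]
  simp only [← List.countP_eq_length_filter]
  rintro ⟨h1, h2, h3, h4, h5, h6, h7, h8, h9, h10, h11⟩
  obtain ⟨c1, c2⟩ := count_add π
  have : π.countP (fun x : ℕ => decide (3 * ((L : ℤ) - (l : ℤ)) + 2 < (x : ℤ))) ≤
      π.countP (fun x => x % 3 ≠ 2) := by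
    apply List.countP_mono_left
    intro x hx hx'
    simp only [decide_eq_true_eq] at hx' ⊢
    intro h
    have := h6 x hx h
    omega
  omega

lemma finsum_range (f : ℕ → ℕ) (N : ℕ) (h : ∀ k, N ≤ k → f k = 0) :
    ∑ᶠ k, f k = ∑ k ∈ Finset.range N, f k := by
  apply finsum_eq_sum_of_support_subset
  intro k hk
  simp only [Finset.coe_range, Set.mem_Iio]
  by_contra hc
  exact hk (h k (by omega))

lemma WW_coeff (n l i j L M : ℕ) (hl : l ≤ L) :
    PowerSeries.coeff n (gfc (WW l (L - l) (3 * M) i j)) =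
    ∑ r ∈ Finset.range (i + 1), ∑ s ∈ Finset.range (j + 1), ∑ t ∈ Finset.range (i + 1),
      (if r + t = i ∧ s + t = j then schurG n r s t l L M else 0) := by
  rw [gfc_fiber _ (fun π => π.countP (fun x => x % 3 = 1)) (i + 1), map_sum]
  · refine Finset.sum_congr rfl fun r _ => ?_
    rw [gfc_fiber _ (fun π => π.countP (fun x => x % 3 = 2)) (j + 1), map_sum]
    · refine Finset.sum_congr rfl fun s _ => ?_
      rw [gfc_fiber _ (fun π => π.countP (fun x => x % 3 = 0)) (i + 1), map_sum]
      · refine Finset.sum_congr rfl fun t _ => ?_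
        split_ifs with h
        · rw [schurG_eq n r s t l i j L M hl h.1 h.2]
        · rw [gfc_zero, map_zero]
          rintro π - ⟨⟨⟨hW, h1⟩, h2⟩, h3⟩
          obtain ⟨c1, c2⟩ := count_add π
          obtain ⟨-, -, -, -, -, h6, h7⟩ := hW
          omega
      · rintro π - ⟨⟨hW, h1⟩, h2⟩
        obtain ⟨c1, c2⟩ := count_add π
        obtain ⟨-, -, -, -, -, h6, h7⟩ := hW
        omega
    · rintro π - ⟨hW, h1⟩
      obtain ⟨c1, c2⟩ := count_add π
      obtain ⟨-, -, -, -, -, h6, h7⟩ := hW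
      omega
  · rintro π - hW
    obtain ⟨c1, c2⟩ := count_add π
    obtain ⟨-, -, -, -, -, h6, h7⟩ := hW
    omega

/-- Theorem 3: the double bounded refinement of Schur's partition theorem.  For
non-negative integers `M ≥ L ≥ i + j`,
`P(n; i, j, L, M) = ∑_{r+t=i, s+t=j} ∑_{l ≥ 0} G(n; r, s, t, l, L, M)`. -/
theorem double_bounded_refined_schur (n i j L M : ℕ)
    (hLM : L ≤ M) (hij : i + j ≤ L) :
    schurP n i j L M = ∑ᶠ (r : ℕ) (s : ℕ) (t : ℕ) (l : ℕ),
      (if r + t = i ∧ s + t = j then schurG n r s t l L M else 0) := by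
  rw [schurP_eq _ _ _ _ _ (by omega), ← WW_main M L i j hLM hij, map_sum]
  rw [Finset.sum_congr rfl fun l hl => WW_coeff n l i j L M
    (by have := Finset.mem_range.1 hl; omega)]
  rw [finsum_range _ (i + 1)]
  · rw [Finset.sum_comm]
    refine Finset.sum_congr rfl fun r _ => ?_
    rw [finsum_range _ (j + 1)]
    · rw [Finset.sum_comm]
      refine Finset.sum_congr rfl fun s _ => ?_
      rw [finsum_range _ (i + 1)]
      · rw [Finset.sum_comm]
        refine Finset.sum_congr rfl fun t _ => ?_
        rw [finsum_range _ (i + 1)]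
        intro l hl
        split_ifs with h
        · exact schurG_zero _ _ _ _ _ _ _ (by omega)
        · rfl
      · intro t ht
        simp only [if_neg (show ¬ (r + t = i ∧ s + t = j) by omega), finsum_zero]
    · intro s hs
      have : ∀ t, ¬ (r + t = i ∧ s + t = j) := by omega
      simp only [if_neg (this _), finsum_zero]
  · intro r hr
    have : ∀ s t, ¬ (r + t = i ∧ s + t = j) := by omega
    simp only [if_neg (this _ _), finsum_zero]
end

section
/- For every integer L ≥ 2, the polynomial R_L(A, B; q) = \sum_{i, j ≥ 0, i+j ≤ L} A^i B^j q^{T_i + T_j} \binom{L}{i, j, L-i-j}_q satisfies the recurrence R_L(A, B; q) = (1 + A q^L + B q^L) R_{L-1}(A, B; q) + A B q^L (1 - q^{L-1}) R_{L-2}(A, B; q). -/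
open Finset

/-- The field `ℚ(A, B, q)` of rational functions in three variables. -/
abbrev K3 := FractionRing (MvPolynomial (Fin 3) ℚ)

/-- The variable `A`. -/
noncomputable def Av : K3 := algebraMap (MvPolynomial (Fin 3) ℚ) K3 (MvPolynomial.X 0)
/-- The variable `B`. -/
noncomputable def Bv : K3 := algebraMap (MvPolynomial (Fin 3) ℚ) K3 (MvPolynomial.X 1)
/-- The variable `q`. -/
noncomputable def qv : K3 := algebraMap (MvPolynomial (Fin 3) ℚ) K3 (MvPolynomial.X 2)

/-- `(x; x)_n = ∏_{t=0}^{n-1} (1 - x^{t+1})`. -/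
noncomputable def pochK (x : K3) (n : ℕ) : K3 := ∏ t ∈ Finset.range n, (1 - x ^ (t + 1))

/-- The q-multinomial coefficient of order 3 with base `x`,
`[u+v+w; u, v, w] = (x;x)_{u+v+w} / ((x;x)_u (x;x)_v (x;x)_w)`, set to `0` if any of
`u, v, w` is negative. -/
noncomputable def trinK (x : K3) (u v w : ℤ) : K3 :=
  if 0 ≤ u ∧ 0 ≤ v ∧ 0 ≤ w then
    pochK x (u + v + w).toNat / (pochK x u.toNat * pochK x v.toNat * pochK x w.toNat) else 0

/-- `T n = n(n+1)/2`, the n-th triangular number. -/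
def tri (n : ℕ) : ℕ := n * (n + 1) / 2

/-- `R_L(A, B; q) = ∑_{i,j ≥ 0, i+j ≤ L} A^i B^j q^{T_i + T_j} [L; i, j, L-i-j]_q`. -/
noncomputable def RL (L : ℕ) : K3 :=
  ∑ i ∈ Finset.range (L + 1), ∑ j ∈ Finset.range (L + 1 - i),
    Av ^ i * Bv ^ j * qv ^ (tri i + tri j) * trinK qv (i : ℤ) (j : ℤ) ((L : ℤ) - i - j)

theorem one_sub_qv_ne (n : ℕ) : (1 : K3) - qv ^ (n + 1) ≠ 0 := by
  intro h
  have h1 : algebraMap (MvPolynomial (Fin 3) ℚ) K3 (1 - MvPolynomial.X 2 ^ (n + 1)) =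
      algebraMap (MvPolynomial (Fin 3) ℚ) K3 0 := by
    rw [map_sub, map_one, map_pow, map_zero]
    exact h
  have h2 := IsFractionRing.injective (MvPolynomial (Fin 3) ℚ) K3 h1
  have h3 := congrArg (MvPolynomial.eval (fun _ => (0 : ℚ))) h2
  simp at h3

theorem pochK_ne (n : ℕ) : pochK qv n ≠ 0 :=
  Finset.prod_ne_zero_iff.mpr fun t _ => one_sub_qv_ne t

theorem pochK_succ (n : ℕ) : pochK qv (n + 1) = pochK qv n * (1 - qv ^ (n + 1)) :=
  Finset.prod_range_succ _ _

theorem tri_succ (n : ℕ) : tri (n + 1) = tri n + (n + 1) := by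
  unfold tri
  have : (n + 1) * (n + 1 + 1) = n * (n + 1) + (n + 1) * 2 := by ring
  rw [this, Nat.add_mul_div_right _ _ (by norm_num)]

/-- One-variable factor. -/
noncomputable def fac (A : K3) (i : ℕ) : K3 := A ^ i * qv ^ tri i / pochK qv i

/-- Shift of a sequence. -/
noncomputable def shf (f : ℕ → K3) (i : ℕ) : K3 := if i = 0 then 0 else f (i - 1)

theorem sum_shf (f : ℕ → K3) (n : ℕ) :
    ∑ i ∈ Finset.range (n + 1), shf f i = ∑ i ∈ Finset.range n, f i := by
  rw [Finset.sum_range_succ']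
  simp [shf]

theorem fac_shf (A : K3) (i : ℕ) : A * qv ^ i * shf (fac A) i = (1 - qv ^ i) * fac A i := by
  cases i with
  | zero => simp [shf]
  | succ i =>
    have h1 := pochK_ne i
    have h2 := one_sub_qv_ne i
    simp only [shf, fac, pochK_succ, tri_succ, Nat.add_sub_cancel]
    rw [if_neg (by omega)]
    field_simp
    ring

/-- Reciprocal of the Pochhammer symbol of the third index `M - i - j`. -/
noncomputable def gam (M k : ℕ) : K3 := if k ≤ M then 1 / pochK qv (M - k) else 0

theorem term_eq (M i j : ℕ) :
    Av ^ i * Bv ^ j * qv ^ (tri i + tri j) * trinK qv (i : ℤ) (j : ℤ) ((M : ℤ) - i - j) =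
      pochK qv M * (fac Av i * fac Bv j * gam M (i + j)) := by
  unfold trinK gam fac
  by_cases h : i + j ≤ M
  · rw [if_pos (by omega), if_pos h]
    have e1 : ((i : ℤ) + j + ((M : ℤ) - i - j)).toNat = M := by omega
    have e2 : ((M : ℤ) - i - j).toNat = M - (i + j) := by omega
    rw [e1, e2, Int.toNat_natCast, Int.toNat_natCast, pow_add]
    have h1 := pochK_ne i
    have h2 := pochK_ne j
    have h3 := pochK_ne (M - (i + j))
    field_simp
  · rw [if_neg (by omega), if_neg h]
    simp

theorem RL_box (M a b : ℕ) (ha : M + 1 ≤ a) (hb : M + 1 ≤ b) :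
    RL M = pochK qv M * ∑ i ∈ Finset.range a, ∑ j ∈ Finset.range b,
      fac Av i * fac Bv j * gam M (i + j) := by
  unfold RL
  simp only [term_eq, Finset.mul_sum]
  have hin : ∀ i, ∑ j ∈ Finset.range (M + 1 - i),
      pochK qv M * (fac Av i * fac Bv j * gam M (i + j)) = ∑ j ∈ Finset.range b,
      pochK qv M * (fac Av i * fac Bv j * gam M (i + j)) := by
    intro i
    apply Finset.sum_subset
    · intro j hj
      rw [Finset.mem_range] at *
      omega
    · intro j _ hj
      rw [Finset.mem_range] at hj
      rw [gam, if_neg (by omega)]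
      simp
  simp only [hin]
  apply Finset.sum_subset
  · intro j hj
    rw [Finset.mem_range] at *
    omega
  · intro i _ hi
    rw [Finset.mem_range] at hi
    apply Finset.sum_eq_zero
    intro j _
    rw [gam, if_neg (by omega)]
    simp

theorem gam_succ (M k : ℕ) : gam (M + 1) (k + 1) = gam M k := by
  simp [gam]

theorem gam_rec (M k : ℕ) :
    qv ^ k * gam M k = (qv ^ k - qv ^ (M + 1)) * gam (M + 1) k := by
  unfold gam
  by_cases h : k ≤ M
  · obtain ⟨w, rfl⟩ := Nat.exists_eq_add_of_le h
    rw [if_pos h, if_pos (by omega)]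
    have e1 : k + w - k = w := by omega
    have e2 : k + w + 1 - k = w + 1 := by omega
    rw [e1, e2, pochK_succ]
    have h1 := pochK_ne w
    have h2 := one_sub_qv_ne w
    field_simp
    ring
  · rw [if_neg h]
    by_cases h' : k = M + 1
    · subst h'
      simp
    · rw [if_neg (by omega)]
      simp

theorem qv_ne : (qv : K3) ≠ 0 := by
  intro h
  unfold qv at h
  rw [map_eq_zero_iff _ (IsFractionRing.injective (MvPolynomial (Fin 3) ℚ) K3)] at h
  exact MvPolynomial.X_ne_zero _ h

theorem point (n i j : ℕ) :
    pochK qv (n + 2) * (fac Av i * fac Bv j * gam (n + 2) (i + j)) =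
      pochK qv (n + 1) * (fac Av i * fac Bv j * gam (n + 1) (i + j)) +
      Av * qv ^ (n + 2) * pochK qv (n + 1) *
        (shf (fac Av) i * fac Bv j * gam (n + 2) (i + j)) +
      Bv * qv ^ (n + 2) * pochK qv (n + 1) *
        (fac Av i * shf (fac Bv) j * gam (n + 2) (i + j)) +
      Av * Bv * qv ^ (n + 2) * (1 - qv ^ (n + 1)) * pochK qv n *
        (shf (fac Av) i * shf (fac Bv) j * gam (n + 2) (i + j)) := by
  have hA := fac_shf Av i
  have hB := fac_shf Bv j
  have hg := gam_rec (n + 1) (i + j)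
  have hq : (qv : K3) ^ (i + j) ≠ 0 := pow_ne_zero _ qv_ne
  apply mul_left_cancel₀ hq
  rw [pochK_succ (n + 1), pochK_succ n]
  rw [show n + 1 + 1 = n + 2 from rfl] at *
  rw [pow_add] at *
  generalize gam (n + 2) (i + j) = G at *
  generalize gam (n + 1) (i + j) = G' at *
  generalize shf (fac Av) i = a' at *
  generalize shf (fac Bv) j = b' at *
  generalize fac Av i = a at *
  generalize fac Bv j = b at *
  generalize pochK qv n = P at *
  generalize (qv : K3) ^ i = x at *
  generalize (qv : K3) ^ j = y at *
  generalize (qv : K3) ^ (n + 1) = z at *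
  generalize (qv : K3) ^ (n + 2) = Q at *
  generalize (Av : K3) = A at *
  generalize (Bv : K3) = B at *
  linear_combination (-(P * (1 - z) * a * b)) * hg
    - (Q * P * (1 - z) * y * b * G) * hA - (Q * P * (1 - z) * x * a * G) * hB
    - (Q * P * (1 - z) * G * B * y * b') * hA
    - (Q * P * (1 - z) * G * (1 - x) * a) * hB

theorem RL_rec_aux (n : ℕ) :
    RL (n + 2) = (1 + Av * qv ^ (n + 2) + Bv * qv ^ (n + 2)) * RL (n + 1) +
      Av * Bv * qv ^ (n + 2) * (1 - qv ^ (n + 1)) * RL n := by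
  have h0 := RL_box (n + 2) (n + 3) (n + 3) (by omega) (by omega)
  have h1 := RL_box (n + 1) (n + 3) (n + 3) (by omega) (by omega)
  have hA : RL (n + 1) = pochK qv (n + 1) * ∑ i ∈ Finset.range (n + 3),
      ∑ j ∈ Finset.range (n + 3), shf (fac Av) i * fac Bv j * gam (n + 2) (i + j) := by
    rw [RL_box (n + 1) (n + 2) (n + 3) (by omega) (by omega), Finset.sum_range_succ' _ (n + 2)]
    simp [shf, ← gam_succ (n + 1), add_right_comm]
  have hB : RL (n + 1) = pochK qv (n + 1) * ∑ i ∈ Finset.range (n + 3),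
      ∑ j ∈ Finset.range (n + 3), fac Av i * shf (fac Bv) j * gam (n + 2) (i + j) := by
    rw [RL_box (n + 1) (n + 3) (n + 2) (by omega) (by omega)]
    simp only [Finset.sum_range_succ' _ (n + 2)]
    simp [Finset.sum_range_succ' _ (n + 2), shf, ← gam_succ (n + 1), ← add_assoc]
  have hAB : RL n = pochK qv n * ∑ i ∈ Finset.range (n + 3),
      ∑ j ∈ Finset.range (n + 3), shf (fac Av) i * shf (fac Bv) j * gam (n + 2) (i + j) := by
    rw [RL_box n (n + 2) (n + 2) (by omega) (by omega)]
    simp only [Finset.sum_range_succ' _ (n + 2)]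
    simp [shf, ← gam_succ (n + 1), ← gam_succ n, ← add_assoc, add_right_comm]
  have key : RL (n + 2) = RL (n + 1) + Av * qv ^ (n + 2) * RL (n + 1) +
      Bv * qv ^ (n + 2) * RL (n + 1) +
      Av * Bv * qv ^ (n + 2) * (1 - qv ^ (n + 1)) * RL n := by
    conv_rhs =>
      rw [hAB]
      congr
      · congr
        · congr
          · rw [h1]
          · rw [hA]
        · rw [hB]
    rw [h0]
    simp only [← mul_assoc _ (pochK qv _) (Finset.sum _ _)]
    simp only [Finset.mul_sum, ← Finset.sum_add_distrib, point]
  rw [key]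
  ring

/-- The recurrence (5.6): for `L ≥ 2`,
`R_L(A,B;q) = (1 + Aq^L + Bq^L) R_{L-1}(A,B;q) + ABq^L (1 - q^{L-1}) R_{L-2}(A,B;q)`. -/
theorem RL_recurrence (L : ℕ) (hL : 2 ≤ L) :
    RL L = (1 + Av * qv ^ L + Bv * qv ^ L) * RL (L - 1) +
      Av * Bv * qv ^ L * (1 - qv ^ (L - 1)) * RL (L - 2) := by
  obtain ⟨n, rfl⟩ := Nat.exists_eq_add_of_le' hL
  exact RL_rec_aux n
end

section
/- The number of partitions of a positive integer n into distinct parts congruent to 2, 4 or 5 modulo 6 equals the number of partitions of n into parts, none equal to 1 or 3, such that any two consecutive parts differ by at least 6, with the difference strictly greater than 6 whenever the larger part is congruent to 0, 1 or 3 modulo 6. -/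
/-- Generating function (with weights `w`) of chains with all parts at most `m`. -/
def gfun {R : Type*} [CommRing R] (good : ℕ → Prop) [DecidablePred good] (f : ℕ → ℕ)
    (w : ℕ → R) : ℕ → R
  | 0 => 1
  | m + 1 => gfun good f w m +
      if good (m + 1) then w (m + 1) * gfun good f w (min (f (m + 1)) m) else 0
termination_by m => m
decreasing_by all_goals omega

/-- The finite set of chains with parts at most `m` and sum `n`. -/
def chains (good : ℕ → Prop) [DecidablePred good] (f : ℕ → ℕ) : ℕ → ℕ → Finset (List ℕ)
  | 0, n => if n = 0 then {[]} else ∅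
  | m + 1, n => chains good f m n ∪
      if good (m + 1) ∧ m + 1 ≤ n then
        (chains good f (min (f (m + 1)) m) (n - (m + 1))).image (List.cons (m + 1)) else ∅
termination_by m => m
decreasing_by all_goals omega

section comb
variable (good : ℕ → Prop) [DecidablePred good] (f : ℕ → ℕ) (r : ℕ → ℕ → Prop)

theorem mem_chains (hpos : ∀ x, good x → 0 < x) (hf : ∀ x, good x → f x < x)
    (hr : ∀ x y, good x → good y → (r x y ↔ y ≤ f x)) (m : ℕ) : ∀ n l,
    l ∈ chains good f m n ↔ (l.IsChain r ∧ (∀ x ∈ l, good x) ∧ (∀ x ∈ l, x ≤ m) ∧ l.sum = n) := by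
  induction m using Nat.strong_induction_on with
  | _ m ih =>
  intro n l
  rcases m with _ | m
  · rw [chains]
    rcases l with _ | ⟨a, l⟩
    · by_cases h : n = 0 <;> simp [h, eq_comm]
    · have : ¬ ((a :: l).IsChain r ∧ (∀ x ∈ a :: l, good x) ∧ (∀ x ∈ a :: l, x ≤ 0) ∧
          (a :: l).sum = n) := by
        rintro ⟨-, h1, h2, -⟩
        have := hpos a (h1 a (by simp))
        have := h2 a (by simp)
        omega
      refine iff_of_false ?_ this
      by_cases h : n = 0 <;> simp [h]
  · rw [chains, Finset.mem_union, ih m (by omega)]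
    constructor
    · rintro (⟨h1, h2, h3, h4⟩ | h)
      · exact ⟨h1, h2, fun x hx => (h3 x hx).trans (by omega), h4⟩
      · split_ifs at h with hg
        · rw [Finset.mem_image] at h
          obtain ⟨t, ht, rfl⟩ := h
          rw [ih _ (by omega)] at ht
          obtain ⟨h1, h2, h3, h4⟩ := ht
          refine ⟨?_, ?_, ?_, ?_⟩
          · rw [List.isChain_cons]
            refine ⟨fun y hy => ?_, h1⟩
            have hy' := List.mem_of_mem_head? hy
            rw [hr _ _ hg.1 (h2 y hy')]
            have := h3 y hy'
            omega
          · intro x hx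
            rcases List.mem_cons.1 hx with rfl | hx
            · exact hg.1
            · exact h2 x hx
          · intro x hx
            rcases List.mem_cons.1 hx with rfl | hx
            · exact le_rfl
            · have := h3 x hx
              omega
          · rw [List.sum_cons, h4]
            omega
        · simp at h
    · rintro ⟨h1, h2, h3, h4⟩
      by_cases hall : ∀ x ∈ l, x ≤ m
      · exact Or.inl ⟨h1, h2, hall, h4⟩
      · right
        rcases l with _ | ⟨a, t⟩
        · simp at hall
        have hga := h2 a (by simp)
        -- all elements of the tail are at most `f a`
        have key : ∀ (t : List ℕ) (a : ℕ), (a :: t).IsChain r → (∀ x ∈ a :: t, good x) →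
            ∀ y ∈ t, y ≤ f a := by
          intro t
          induction t with
          | nil => simp
          | cons b t iht =>
            intro a hc hgood y hy
            rw [List.isChain_cons_cons] at hc
            have hb := (hr a b (hgood a (by simp)) (hgood b (by simp))).1 hc.1
            rcases List.mem_cons.1 hy with rfl | hy
            · exact hb
            · have h5 := iht b hc.2 (fun x hx => hgood x (List.mem_cons_of_mem _ hx)) y hy
              have := hf b (hgood b (by simp))
              omega
        have hkey := key t a h1 h2
        have hfa := hf a hga
        have ham : a = m + 1 := by
          by_contra hne
          apply hall
          intro x hx
          have ha := h3 a (by simp)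
          rcases List.mem_cons.1 hx with rfl | hx
          · omega
          · have := hkey x hx
            omega
        subst ham
        rw [List.sum_cons] at h4
        rw [if_pos ⟨hga, by omega⟩, Finset.mem_image]
        refine ⟨t, ?_, rfl⟩
        rw [ih _ (by omega)]
        rw [List.isChain_cons] at h1
        refine ⟨h1.2, fun x hx => h2 x (List.mem_cons_of_mem _ hx), fun x hx => ?_, by omega⟩
        have := hkey x hx
        omega

theorem card_chains (hpos : ∀ x, good x → 0 < x) (hf : ∀ x, good x → f x < x)
    (hr : ∀ x y, good x → good y → (r x y ↔ y ≤ f x)) (m : ℕ) : ∀ n,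
    ((chains good f m n).card : ℤ) =
      PowerSeries.coeff n (gfun good f (fun i => (PowerSeries.X : PowerSeries ℤ) ^ i) m) := by
  induction m using Nat.strong_induction_on with
  | _ m ih =>
  intro n
  rcases m with _ | m
  · rw [chains, gfun, PowerSeries.coeff_one]
    split_ifs <;> simp
  · rw [chains, gfun, map_add, ← ih m (by omega), Finset.card_union_of_disjoint]
    · push_cast
      congr 1
      by_cases hg : good (m + 1)
      · by_cases hn : m + 1 ≤ n
        · rw [if_pos ⟨hg, hn⟩, if_pos hg, PowerSeries.coeff_X_pow_mul', if_pos hn,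
            Finset.card_image_of_injective _ (List.cons_injective), ih _ (by omega)]
        · rw [if_neg (by tauto), if_pos hg, PowerSeries.coeff_X_pow_mul', if_neg hn]
          simp
      · rw [if_neg (by tauto), if_neg hg]
        simp
    · rw [Finset.disjoint_left]
      intro l hl hl'
      rw [mem_chains good f r hpos hf hr] at hl
      split_ifs at hl' with hg
      · rw [Finset.mem_image] at hl'
        obtain ⟨t, -, rfl⟩ := hl'
        have := hl.2.2.1 (m + 1) (by simp)
        omega
      · simp at hl'

theorem ncard_chains (hpos : ∀ x, good x → 0 < x) (hf : ∀ x, good x → f x < x)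
    (hr : ∀ x y, good x → good y → (r x y ↔ y ≤ f x)) (m n : ℕ) (hmn : n ≤ m) :
    (({l : List ℕ | l.IsChain r ∧ (∀ x ∈ l, good x) ∧ l.sum = n}.ncard : ℕ) : ℤ) =
      PowerSeries.coeff n (gfun good f (fun i => (PowerSeries.X : PowerSeries ℤ) ^ i) m) := by
  rw [← card_chains good f r hpos hf hr, ← Set.ncard_coe_finset]
  congr 2
  ext l
  simp only [Set.mem_ofPred_eq, Finset.mem_coe]
  rw [mem_chains good f r hpos hf hr]
  constructor
  · rintro ⟨h1, h2, h3⟩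
    exact ⟨h1, h2, fun x hx => (List.single_le_sum (by simp) x hx).trans (by omega), h3⟩
  · rintro ⟨h1, h2, -, h3⟩
    exact ⟨h1, h2, h3⟩

end comb

abbrev goodD (x : ℕ) : Prop := x % 6 = 2 ∨ x % 6 = 4 ∨ x % 6 = 5
abbrev goodB (x : ℕ) : Prop := 0 < x ∧ x ≠ 1 ∧ x ≠ 3
def fB (x : ℕ) : ℕ := if x % 6 = 0 ∨ x % 6 = 1 ∨ x % 6 = 3 then x - 7 else x - 6
def wB {R : Type*} [CommRing R] (x q : R) (m : ℕ) : R :=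
  if m % 6 = 0 ∨ m % 6 = 1 ∨ m % 6 = 3 then x ^ 2 * q ^ m else x * q ^ m

/-- The Göllnitz polynomials. -/
def GB {R : Type*} [CommRing R] (x q : R) (m : ℕ) : R := gfun goodB fB (wB x q) m

section rec
variable {R : Type*} [CommRing R] (x q : R)

theorem GB_prim (m j : ℕ) (hm : goodB (m + 1)) (hj : fB (m + 1) = j) (hjm : j ≤ m)
    (h : (m + 1) % 6 = 2 ∨ (m + 1) % 6 = 4 ∨ (m + 1) % 6 = 5) :
    GB x q (m + 1) = GB x q m + x * q ^ (m + 1) * GB x q j := by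
  rw [GB, gfun, if_pos hm, hj, min_eq_left hjm, wB, if_neg (by omega)]
  rfl

theorem GB_sec (m j : ℕ) (hm : goodB (m + 1)) (hj : fB (m + 1) = j) (hjm : j ≤ m)
    (h : (m + 1) % 6 = 0 ∨ (m + 1) % 6 = 1 ∨ (m + 1) % 6 = 3) :
    GB x q (m + 1) = GB x q m + x ^ 2 * q ^ (m + 1) * GB x q j := by
  rw [GB, gfun, if_pos hm, hj, min_eq_left hjm, wB, if_pos (by omega)]
  rfl

theorem GB_zero : GB x q 0 = 1 := by rw [GB, gfun]
theorem GB_one : GB x q 1 = 1 := by rw [GB, gfun, gfun, if_neg (by decide), add_zero]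
theorem GB_three : GB x q 3 = GB x q 2 := by
  rw [GB, gfun, if_neg (by decide), add_zero]; rfl

theorem fB_prim (m j : ℕ) (h : m % 6 = 2 ∨ m % 6 = 4 ∨ m % 6 = 5) (hj : m - 6 = j) :
    fB m = j := by
  rw [fB, if_neg (by omega), hj]

theorem fB_sec (m j : ℕ) (h : m % 6 = 0 ∨ m % 6 = 1 ∨ m % 6 = 3) (hj : m - 7 = j) :
    fB m = j := by
  rw [fB, if_pos (by omega), hj]

theorem step11 (k : ℕ) : GB x q (6 * k + 11) =
    GB x q (6 * k + 10) + x * q ^ (6 * k + 11) * GB x q (6 * k + 5) :=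
  GB_prim x q (6 * k + 10) _ ⟨by omega, by omega, by omega⟩
    (fB_prim _ _ (by omega) (by omega)) (by omega) (by omega)
theorem step12 (k : ℕ) : GB x q (6 * k + 12) =
    GB x q (6 * k + 11) + x ^ 2 * q ^ (6 * k + 12) * GB x q (6 * k + 5) :=
  GB_sec x q (6 * k + 11) _ ⟨by omega, by omega, by omega⟩
    (fB_sec _ _ (by omega) (by omega)) (by omega) (by omega)
theorem step13 (k : ℕ) : GB x q (6 * k + 13) =
    GB x q (6 * k + 12) + x ^ 2 * q ^ (6 * k + 13) * GB x q (6 * k + 6) :=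
  GB_sec x q (6 * k + 12) _ ⟨by omega, by omega, by omega⟩
    (fB_sec _ _ (by omega) (by omega)) (by omega) (by omega)
theorem step14 (k : ℕ) : GB x q (6 * k + 14) =
    GB x q (6 * k + 13) + x * q ^ (6 * k + 14) * GB x q (6 * k + 8) :=
  GB_prim x q (6 * k + 13) _ ⟨by omega, by omega, by omega⟩
    (fB_prim _ _ (by omega) (by omega)) (by omega) (by omega)
theorem step15 (k : ℕ) : GB x q (6 * k + 15) =
    GB x q (6 * k + 14) + x ^ 2 * q ^ (6 * k + 15) * GB x q (6 * k + 8) :=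
  GB_sec x q (6 * k + 14) _ ⟨by omega, by omega, by omega⟩
    (fB_sec _ _ (by omega) (by omega)) (by omega) (by omega)
theorem step16 (k : ℕ) : GB x q (6 * k + 16) =
    GB x q (6 * k + 15) + x * q ^ (6 * k + 16) * GB x q (6 * k + 10) :=
  GB_prim x q (6 * k + 15) _ ⟨by omega, by omega, by omega⟩
    (fB_prim _ _ (by omega) (by omega)) (by omega) (by omega)

theorem base2 : GB x q 2 = 1 + x * q ^ 2 := by
  rw [GB_prim x q 1 0 (by decide) (by decide) (by decide) (by decide), GB_zero, GB_one]; ring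
theorem base4 : GB x q 4 = 1 + x * q ^ 2 + x * q ^ 4 := by
  rw [GB_prim x q 3 0 (by decide) (by decide) (by decide) (by decide), GB_zero, GB_three, base2]
  ring
theorem base5 : GB x q 5 = 1 + x * q ^ 2 + x * q ^ 4 + x * q ^ 5 := by
  rw [GB_prim x q 4 0 (by decide) (by decide) (by decide) (by decide), GB_zero, base4]
  ring
theorem base6 : GB x q 6 = 1 + x * q ^ 2 + x * q ^ 4 + x * q ^ 5 + x ^ 2 * q ^ 6 := by
  rw [GB_sec x q 5 0 (by decide) (by decide) (by decide) (by decide), GB_zero, base5]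
  ring
theorem base8 : GB x q 8 = 1 + x * q ^ 2 + x * q ^ 4 + x * q ^ 5 + x ^ 2 * q ^ 6
    + x ^ 2 * q ^ 7 + x * q ^ 8 * (1 + x * q ^ 2) := by
  rw [GB_prim x q 7 2 (by decide) (by decide) (by decide) (by decide),
    GB_sec x q 6 0 (by decide) (by decide) (by decide) (by decide), GB_zero, base6, base2]
  ring
theorem base10 : GB x q 10 = 1 + x * q ^ 2 + x * q ^ 4 + x * q ^ 5 + x ^ 2 * q ^ 6
    + x ^ 2 * q ^ 7 + x * q ^ 8 * (1 + x * q ^ 2) + x ^ 2 * q ^ 9 * (1 + x * q ^ 2)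
    + x * q ^ 10 * (1 + x * q ^ 2 + x * q ^ 4) := by
  rw [GB_prim x q 9 4 (by decide) (by decide) (by decide) (by decide),
    GB_sec x q 8 2 (by decide) (by decide) (by decide) (by decide), base8, base2, base4]

set_option maxHeartbeats 4000000 in
/-- The key functional equations, proved simultaneously by induction. -/
theorem key_rel (k : ℕ) :
    let P := (1 + x * q ^ 2) * (1 + x * q ^ 4) * (1 + x * q ^ 5)
    let Q := q ^ (6 * k)
    let y := x * q ^ 6
    let g5 := GB x q (6 * k + 5)
    let g6 := GB x q (6 * k + 6)
    let g8 := GB x q (6 * k + 8)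
    let g10 := GB x q (6 * k + 10)
    (P * GB y q (6 * k + 5) =
      (x*q^11*Q + x^2*q^12*Q + x*q^23*Q^2 + x^2*q^24*Q^2) * g5
      + (x^2*q^13*Q - x*q^23*Q^2) * g6
      + (x*q^14*Q + x^2*q^15*Q) * g8
      + (1 - x*q^14*Q) * g10) ∧
    (P * GB y q (6 * k + 6) =
      (x*q^11*Q + x^2*q^12*Q - x^2*q^25*Q^2 - x^2*q^27*Q^2 - x^3*q^26*Q^2 - x^3*q^28*Q^2 - q^30*Q^3 - x*q^31*Q^3) * g5
      + (x^2*q^13*Q + x*q^22*Q^2 + x^2*q^24*Q^2 + x^2*q^25*Q^2 + x^2*q^27*Q^2 + q^30*Q^3) * g6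
      + (x*q^14*Q + x^2*q^15*Q - q^21*Q^2 - x*q^22*Q^2) * g8
      + (1 - x*q^14*Q + x^2*q^18*Q + q^21*Q^2) * g10) ∧
    (P * GB y q (6 * k + 8) =
      (x*q^11*Q + x^2*q^12*Q - x^2*q^27*Q^2 - x^3*q^28*Q^2 + x^3*q^30*Q^2 + x^4*q^31*Q^2 + x*q^35*Q^3 + x^2*q^36*Q^3) * g5
      + (x^2*q^13*Q - x^3*q^29*Q^2 - x^3*q^30*Q^2 - x*q^35*Q^3) * g6
      + (x*q^14*Q + x^2*q^15*Q + x*q^26*Q^2 + x^2*q^27*Q^2) * g8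
      + (1 + x^2*q^18*Q + x^2*q^19*Q - x*q^26*Q^2) * g10) ∧
    (P * GB y q (6 * k + 10) =
      (x*q^11*Q + x^2*q^12*Q + x^3*q^30*Q^2 + x^3*q^32*Q^2 + x^4*q^31*Q^2 + x^4*q^33*Q^2 - x^2*q^40*Q^3 - x^3*q^41*Q^3) * g5
      + (x^2*q^13*Q - x^3*q^30*Q^2 + x^4*q^34*Q^2 + x^2*q^40*Q^3) * g6
      + (x*q^14*Q + x^2*q^15*Q - x^2*q^31*Q^2 - x^3*q^32*Q^2) * g8
      + (1 + x*q^16*Q + x^2*q^18*Q + x^2*q^19*Q + x^2*q^21*Q + x^2*q^31*Q^2) * g10) := by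
  induction k with
  | zero =>
    simp only [mul_zero, zero_add, base5, base6, base8, base10, pow_zero]
    refine ⟨?_, ?_, ?_, ?_⟩ <;> ring
  | succ k ih =>
    simp only at ih ⊢
    obtain ⟨h5, h6, h8, h10⟩ := ih
    have e5 : 6 * (k + 1) + 5 = 6 * k + 11 := by ring
    have e6 : 6 * (k + 1) + 6 = 6 * k + 12 := by ring
    have e8 : 6 * (k + 1) + 8 = 6 * k + 14 := by ring
    have e10 : 6 * (k + 1) + 10 = 6 * k + 16 := by ring
    have e0 : q ^ (6 * (k + 1)) = q ^ (6 * k) * q ^ 6 := by ring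
    rw [e5, e6, e8, e10, e0]
    simp only [step16, step15, step14, step13, step12, step11, pow_add q (6 * k)]
    generalize q ^ (6 * k) = Q at *
    generalize GB x q (6 * k + 5) = g5 at *
    generalize GB x q (6 * k + 6) = g6 at *
    generalize GB x q (6 * k + 8) = g8 at *
    generalize GB x q (6 * k + 10) = g10 at *
    generalize GB (x * q ^ 6) q (6 * k + 5) = u5 at *
    generalize GB (x * q ^ 6) q (6 * k + 6) = u6 at *
    generalize GB (x * q ^ 6) q (6 * k + 8) = u8 at *
    generalize GB (x * q ^ 6) q (6 * k + 10) = u10 at *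
    refine ⟨?_, ?_, ?_, ?_⟩
    · linear_combination h10 + x * q ^ 6 * (Q * q ^ 11) * h5
    · linear_combination h10 + (x * q ^ 6 * (Q * q ^ 11) + (x * q ^ 6) ^ 2 * (Q * q ^ 12)) * h5
    · linear_combination h10 + (x * q ^ 6 * (Q * q ^ 11) + (x * q ^ 6) ^ 2 * (Q * q ^ 12)) * h5
        + (x * q ^ 6) ^ 2 * (Q * q ^ 13) * h6 + x * q ^ 6 * (Q * q ^ 14) * h8
    · linear_combination h10 + (x * q ^ 6 * (Q * q ^ 11) + (x * q ^ 6) ^ 2 * (Q * q ^ 12)) * h5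
        + (x * q ^ 6) ^ 2 * (Q * q ^ 13) * h6 + x * q ^ 6 * (Q * q ^ 14) * h8
        + (x * q ^ 6) ^ 2 * (Q * q ^ 15) * h8 + x * q ^ 6 * (Q * q ^ 16) * h10

theorem key_dvd (k : ℕ) : q ^ (6 * k) ∣
    (1 + x * q ^ 2) * (1 + x * q ^ 4) * (1 + x * q ^ 5) * GB (x * q ^ 6) q (6 * k + 10)
      - GB x q (6 * k + 10) := by
  have h := (key_rel x q k).2.2.2
  rw [h]
  generalize q ^ (6 * k) = Q
  generalize GB x q (6 * k + 5) = g5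
  generalize GB x q (6 * k + 6) = g6
  generalize GB x q (6 * k + 8) = g8
  generalize GB x q (6 * k + 10) = g10
  exact ⟨(x*q^11 + x^2*q^12 + x^3*q^30*Q + x^3*q^32*Q + x^4*q^31*Q + x^4*q^33*Q - x^2*q^40*Q^2 - x^3*q^41*Q^2) * g5
      + (x^2*q^13 - x^3*q^30*Q + x^4*q^34*Q + x^2*q^40*Q^2) * g6
      + (x*q^14 + x^2*q^15 - x^2*q^31*Q - x^3*q^32*Q) * g8
      + (x*q^16 + x^2*q^18 + x^2*q^19 + x^2*q^21 + x^2*q^31*Q) * g10, by ring⟩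

theorem GB_dvd (m : ℕ) : x ∣ GB x q m - 1 := by
  unfold GB
  induction m using Nat.strong_induction_on with
  | _ m ih =>
  rcases m with _ | m
  · simp [gfun]
  · rw [gfun]
    have h := ih m (by omega)
    have : x ∣ (if goodB (m + 1) then
        wB x q (m + 1) * gfun goodB fB (wB x q) (min (fB (m + 1)) m) else 0) := by
      split_ifs with hg
      · apply Dvd.dvd.mul_right
        unfold wB
        split_ifs
        · exact Dvd.dvd.mul_right (Dvd.intro_left x (by ring)) _
        · exact Dvd.intro _ rfl
      · exact dvd_zero _
    have h2 := dvd_add h this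
    convert h2 using 1
    ring

theorem iter_dvd (k J : ℕ) : q ^ (6 * k) ∣
    (∏ i ∈ Finset.range J, (1 + q ^ (6 * i) * q ^ 2) * (1 + q ^ (6 * i) * q ^ 4) *
      (1 + q ^ (6 * i) * q ^ 5)) * GB (q ^ (6 * J)) q (6 * k + 10) - GB 1 q (6 * k + 10) := by
  induction J with
  | zero => simp
  | succ J ih =>
    have h := key_dvd (q ^ (6 * J)) q k
    have e : q ^ (6 * (J + 1)) = q ^ (6 * J) * q ^ 6 := by ring
    rw [Finset.prod_range_succ, e]
    have h2 := dvd_add (Dvd.dvd.mul_left h (∏ i ∈ Finset.range J, (1 + q ^ (6 * i) * q ^ 2) *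
      (1 + q ^ (6 * i) * q ^ 4) * (1 + q ^ (6 * i) * q ^ 5))) ih
    convert h2 using 1
    ring

theorem final_dvd (k : ℕ) : q ^ (6 * k) ∣
    (∏ i ∈ Finset.range k, (1 + q ^ (6 * i) * q ^ 2) * (1 + q ^ (6 * i) * q ^ 4) *
      (1 + q ^ (6 * i) * q ^ 5)) - GB 1 q (6 * k + 10) := by
  have h := iter_dvd q k k
  have h1 := GB_dvd (q ^ (6 * k)) q (6 * k + 10)
  have h2 := dvd_sub h (Dvd.dvd.mul_left h1 (∏ i ∈ Finset.range k, (1 + q ^ (6 * i) * q ^ 2) *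
      (1 + q ^ (6 * i) * q ^ 4) * (1 + q ^ (6 * i) * q ^ 5)))
  convert h2 using 1
  ring

theorem gfunD (m : ℕ) : gfun goodD (fun i => i - 1) (fun i => q ^ i) (m + 1) =
    gfun goodD (fun i => i - 1) (fun i => q ^ i) m * if goodD (m + 1) then 1 + q ^ (m + 1) else 1 := by
  rw [gfun]
  split_ifs
  · simp
    ring
  · ring

theorem gfunD_prod (k : ℕ) : gfun goodD (fun i => i - 1) (fun i => q ^ i) (6 * k) =
    ∏ i ∈ Finset.range k, (1 + q ^ (6 * i) * q ^ 2) * (1 + q ^ (6 * i) * q ^ 4) *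
      (1 + q ^ (6 * i) * q ^ 5) := by
  induction k with
  | zero => simp [gfun]
  | succ k ih =>
    rw [Finset.prod_range_succ, ← ih, show 6 * (k + 1) = 6 * k + 5 + 1 by ring, gfunD, gfunD,
      gfunD, gfunD, gfunD, gfunD,
      if_neg (show ¬ goodD (6 * k + 5 + 1) by omega),
      if_pos (show goodD (6 * k + 4 + 1) by omega),
      if_pos (show goodD (6 * k + 3 + 1) by omega),
      if_neg (show ¬ goodD (6 * k + 2 + 1) by omega),
      if_pos (show goodD (6 * k + 1 + 1) by omega),
      if_neg (show ¬ goodD (6 * k + 1) by omega)]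
    ring

end rec

/-- Göllnitz's (big) partition theorem: the number of partitions of `n` into distinct
parts congruent to 2, 4 or 5 mod 6 equals the number of partitions of `n` into parts
different from 1 and 3 such that consecutive parts differ by at least 6, with the
difference strictly greater than 6 whenever the larger part is ≡ 0, 1 or 3 (mod 6).
Partitions are represented as decreasing lists of positive integers. -/
theorem gollnitz_partition_theorem (n : ℕ) (hn : 0 < n) :
    {l : List ℕ | l.Chain' (· > ·) ∧ (∀ x ∈ l, x % 6 = 2 ∨ x % 6 = 4 ∨ x % 6 = 5) ∧
      l.sum = n}.ncard =
    {l : List ℕ | (∀ x ∈ l, 0 < x ∧ x ≠ 1 ∧ x ≠ 3) ∧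
      l.Chain' (fun x y => y + 6 ≤ x ∧ (x % 6 = 0 ∨ x % 6 = 1 ∨ x % 6 = 3 → y + 6 < x)) ∧
      l.sum = n}.ncard := by
  have hB := ncard_chains goodB fB
    (fun x y => y + 6 ≤ x ∧ (x % 6 = 0 ∨ x % 6 = 1 ∨ x % 6 = 3 → y + 6 < x))
    (fun x h => h.1) (fun x h => by unfold fB; split_ifs <;> omega)
    (fun x y hx hy => by unfold fB; split_ifs <;> omega)
    (6 * (n + 1) + 10) n (by omega)
  have hD := ncard_chains goodD (fun i => i - 1) (· > ·)
    (fun x h => by omega) (fun x h => by omega)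
    (fun x y hx hy => by omega)
    (6 * (n + 1)) n (by omega)
  have hw : (fun i => (PowerSeries.X : PowerSeries ℤ) ^ i) = wB 1 PowerSeries.X := by
    funext i
    unfold wB
    split_ifs <;> simp
  have hfin := final_dvd (PowerSeries.X : PowerSeries ℤ) (n + 1)
  rw [← gfunD_prod, PowerSeries.X_pow_dvd_iff] at hfin
  have h0 := hfin n (by omega)
  rw [map_sub, sub_eq_zero, GB, ← hw, ← hD, ← hB] at h0
  have h1 := Nat.cast_injective h0
  exact h1.trans (congrArg Set.ncard (Set.ext fun l =>
    ⟨fun ⟨a, b, c⟩ => ⟨b, a, c⟩, fun ⟨a, b, c⟩ => ⟨b, a, c⟩⟩))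
end
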